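/- arXiv:1803.04064 — 3 statements merged into one kernel-verified Lean document; each statement's English description precedes it below -/
import Mathlib

section
/- Let L/k be a dihedral extension of number fields of degree 2q (q odd) with Galois group D, and let K, K' be the fixed fields of two distinct order-2 subgroups Σ, Σ'. Let η: Cl(K) ⊕ Cl(K') → Cl(L) be given by extension of ideals. Then, after tensoring with Z[1/2], the kernel of η is isomorphic to H⁰(D, Cl(L) ⊗ Z[1/2]) = (Cl(L) ⊗ Z[1/2])^D, via (c, c') ↦ i_{L/K}(c). -/
open DihedralGroup NumberField IntermediateField
open scoped nonZeroDivisors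


/-- The common fixed points of a family of additive endomorphisms. -/
def fixedPts {M : Type*} [AddCommGroup M] {ι : Type*} (T : ι → (M →+ M)) :
    AddSubgroup M where
  carrier := {x | ∀ i, T i x = x}
  zero_mem' := fun i => map_zero (T i)
  add_mem' := by intro a b ha hb i; rw [map_add, ha i, hb i]
  neg_mem' := by intro a ha i; rw [map_neg, ha i]

section Involution

variable {A B : Type*} [CommRing A] [CommRing B] [IsDedekindDomain B] [Algebra A B] (σ : B →+* B)

/-- If `A` is the fixed ring of an involution `σ` of a Dedekind domain `B`, then `I * σ I` is
extended from `A` for every nonzero ideal `I` of `B`. -/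
theorem exists_map_eq_mul_map_involution (hinv : ∀ b, σ (σ b) = b)
    (hfix : ∀ b, σ b = b → ∃ a, algebraMap A B a = b) {I : Ideal B} (hI : I ≠ ⊥) :
    ∃ N : Ideal A, N ≠ ⊥ ∧ N.map (algebraMap A B) = I * I.map σ := by
  obtain ⟨x, hxI, hx⟩ := Submodule.exists_mem_ne_zero_of_ne_bot hI
  obtain ⟨y, hy⟩ := IsDedekindDomain.exists_eq_span_pair hxI hx
  have hσ : Function.Injective σ := Function.LeftInverse.injective hinv
  obtain ⟨n, hn⟩ := hfix (x * σ x) (by rw [map_mul, hinv, mul_comm])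
  obtain ⟨m, hm⟩ := hfix (y * σ y) (by rw [map_mul, hinv, mul_comm])
  obtain ⟨t, ht⟩ := hfix (x * σ y + y * σ x) (by simp only [map_add, map_mul, hinv]; ring)
  have hn0 : n ≠ 0 := by
    rintro rfl
    rw [map_zero] at hn
    exact mul_ne_zero hx ((map_ne_zero_iff σ hσ).2 hx) hn.symm
  refine ⟨Ideal.span {n, m, t}, fun h => hn0 ?_, ?_⟩
  · exact (Submodule.eq_bot_iff _).1 h n (Ideal.subset_span (by simp))
  have hM : I * I.map σ = Ideal.span {x * σ x, x * σ y, y * σ x, y * σ y} := by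
    rw [hy, Ideal.map_span, Set.image_pair, Ideal.span_pair_mul_span_pair]
  have hJ : (Ideal.span {n, m, t}).map (algebraMap A B) =
      Ideal.span {x * σ x, y * σ y, x * σ y + y * σ x} := by
    rw [Ideal.map_span, Set.image_insert_eq, Set.image_pair, hn, hm, ht]
  rw [hM, hJ]
  set J : Ideal B := Ideal.span {x * σ x, y * σ y, x * σ y + y * σ x} with hJdef
  set M : Ideal B := Ideal.span {x * σ x, x * σ y, y * σ x, y * σ y} with hMdef
  have m1 : x * σ x ∈ M := Ideal.subset_span (by simp)
  have m2 : x * σ y ∈ M := Ideal.subset_span (by simp)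
  have m3 : y * σ x ∈ M := Ideal.subset_span (by simp)
  have m4 : y * σ y ∈ M := Ideal.subset_span (by simp)
  have j1 : x * σ x ∈ J := Ideal.subset_span (by simp)
  have j2 : y * σ y ∈ J := Ideal.subset_span (by simp)
  have j3 : x * σ y + y * σ x ∈ J := Ideal.subset_span (by simp)
  have hM0 : M ≠ ⊥ := fun h =>
    mul_ne_zero hx ((map_ne_zero_iff σ hσ).2 hx) ((Submodule.eq_bot_iff _).1 h _ m1)
  have hJM : J ≤ M := by
    rw [hJdef, Ideal.span_le]
    rintro z (rfl | rfl | rfl)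
    exacts [m1, m4, M.add_mem m2 m3]
  have hcross : (x * σ y) * (y * σ x) ∈ J * M := by
    have := Ideal.mul_mem_mul j1 m4
    convert this using 1; ring
  have hMM : M * M ≤ J * M := by
    rw [hMdef, Ideal.span_mul_span', Ideal.span_le, ← hMdef]
    rintro z ⟨u, hu, v, hv, rfl⟩
    have hu' : u ∈ M := Ideal.subset_span hu
    have hv' : v ∈ M := Ideal.subset_span hv
    simp only [Set.mem_insert_iff, Set.mem_singleton_iff] at hu hv
    change u * v ∈ J * M
    rcases hu with rfl | rfl | rfl | rfl
    · exact Ideal.mul_mem_mul j1 hv'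
    · rcases hv with rfl | rfl | rfl | rfl
      · rw [mul_comm (_ * _)]; exact Ideal.mul_mem_mul j1 hu'
      · have := Ideal.sub_mem _ (Ideal.mul_mem_mul j3 m2) hcross
        convert this using 1; ring
      · exact hcross
      · rw [mul_comm (_ * _)]; exact Ideal.mul_mem_mul j2 hu'
    · rcases hv with rfl | rfl | rfl | rfl
      · rw [mul_comm (_ * _)]; exact Ideal.mul_mem_mul j1 hu'
      · rw [mul_comm (_ * _)]; exact hcross
      · have := Ideal.sub_mem _ (Ideal.mul_mem_mul j3 m3) hcross
        convert this using 1; ring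
      · rw [mul_comm (_ * _)]; exact Ideal.mul_mem_mul j2 hu'
    · exact Ideal.mul_mem_mul j2 hv'
  exact mul_right_cancel₀ hM0 (le_antisymm (Ideal.mul_mono_left hJM) hMM)

variable [IsDedekindDomain A]

/-- If `A` is the fixed ring of an involution of a Dedekind domain `B`, then every ideal of `A`
that becomes principal in `B` has principal square. -/
theorem isPrincipal_sq_of_isPrincipal_map [Module.IsTorsionFree A B]
    [Algebra.IsIntegral A B]
    (hinv : ∀ b, σ (σ b) = b) (hfix : ∀ b, σ b = b → ∃ a, algebraMap A B a = b)
    (hA : ∀ a, σ (algebraMap A B a) = algebraMap A B a) {I : Ideal A}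
    (hI : (I.map (algebraMap A B)).IsPrincipal) : (I ^ 2).IsPrincipal := by
  obtain ⟨x, hx⟩ := hI
  rw [Ideal.submodule_span_eq] at hx
  obtain ⟨n, hn⟩ := hfix (x * σ x) (by rw [map_mul, hinv, mul_comm])
  have hσI : (I.map (algebraMap A B)).map σ = I.map (algebraMap A B) := by
    rw [Ideal.map_map]
    congr 1
    exact RingHom.ext hA
  refine ⟨n, Ideal.map_injective_of_faithfullyFlat (B := B) ?_⟩
  rw [Ideal.submodule_span_eq, Ideal.map_pow, sq, Ideal.map_span, Set.image_singleton, hn,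
    ← Ideal.span_singleton_mul_span_singleton, ← hx]
  congr 1
  rw [← hσI, hx, Ideal.map_span, Set.image_singleton]

/-- A class of the fixed ring that dies in `B` is killed by `2`. -/
theorem sq_eq_one_of_extension_eq_one [Module.IsTorsionFree A B] [Algebra.IsIntegral A B]
    (hinv : ∀ b, σ (σ b) = b) (hfix : ∀ b, σ b = b → ∃ a, algebraMap A B a = b)
    (hA : ∀ a, σ (algebraMap A B a) = algebraMap A B a)
    (ι : ClassGroup A →* ClassGroup B)
    (hι : ∀ (I : (Ideal A)⁰) (J : (Ideal B)⁰),
      (J : Ideal B) = Ideal.map (algebraMap A B) (I : Ideal A) →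
        ι (ClassGroup.mk0 I) = ClassGroup.mk0 J)
    (c : ClassGroup A) (hc : ι c = 1) : c ^ 2 = 1 := by
  obtain ⟨I, rfl⟩ := ClassGroup.mk0_surjective c
  rw [hι I (ClassGroup.extendedIdeal A B I) rfl, ClassGroup.mk0_eq_one_iff] at hc
  have hsq := isPrincipal_sq_of_isPrincipal_map σ hinv hfix hA hc
  rw [← ClassGroup.mk0_eq_one_iff (pow_mem I.2 2)] at hsq
  rw [← hsq, ← map_pow]
  rfl

/-- Extended classes are fixed by ring endomorphisms fixing the base ring. -/
theorem action_extension_eq [Module.IsTorsionFree A B]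
    (hA : ∀ a, σ (algebraMap A B a) = algebraMap A B a)
    (ι : ClassGroup A →* ClassGroup B)
    (hι : ∀ (I : (Ideal A)⁰) (J : (Ideal B)⁰),
      (J : Ideal B) = Ideal.map (algebraMap A B) (I : Ideal A) →
        ι (ClassGroup.mk0 I) = ClassGroup.mk0 J)
    (τ : ClassGroup B →* ClassGroup B)
    (hτ : ∀ I J : (Ideal B)⁰, (J : Ideal B) = Ideal.map σ (I : Ideal B) →
      τ (ClassGroup.mk0 I) = ClassGroup.mk0 J)
    (c : ClassGroup A) : τ (ι c) = ι c := by
  obtain ⟨I, rfl⟩ := ClassGroup.mk0_surjective c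
  rw [hι I (ClassGroup.extendedIdeal A B I) rfl]
  refine hτ _ _ ?_
  change I.1.map (algebraMap A B) = (I.1.map (algebraMap A B)).map σ
  rw [Ideal.map_map]
  congr 1
  exact (RingHom.ext hA).symm

/-- The norm `c * σ c` of a class of `B` is extended from the fixed ring. -/
theorem exists_extension_eq_mul_action (hinv : ∀ b, σ (σ b) = b)
    (hfix : ∀ b, σ b = b → ∃ a, algebraMap A B a = b)
    (ι : ClassGroup A →* ClassGroup B)
    (hι : ∀ (I : (Ideal A)⁰) (J : (Ideal B)⁰),
      (J : Ideal B) = Ideal.map (algebraMap A B) (I : Ideal A) →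
        ι (ClassGroup.mk0 I) = ClassGroup.mk0 J)
    (τ : ClassGroup B →* ClassGroup B)
    (hτ : ∀ I J : (Ideal B)⁰, (J : Ideal B) = Ideal.map σ (I : Ideal B) →
      τ (ClassGroup.mk0 I) = ClassGroup.mk0 J)
    (c : ClassGroup B) : ∃ d, ι d = c * τ c := by
  obtain ⟨I, rfl⟩ := ClassGroup.mk0_surjective c
  have hI : I.1 ≠ ⊥ := mem_nonZeroDivisors_iff_ne_zero.1 I.2
  have hσ : Function.Injective σ := Function.LeftInverse.injective hinv
  obtain ⟨N, hN, hNI⟩ := exists_map_eq_mul_map_involution (A := A) σ hinv hfix hI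
  let I' : (Ideal B)⁰ := ⟨I.1.map σ, mem_nonZeroDivisors_iff_ne_zero.2
    ((Ideal.map_eq_bot_iff_of_injective hσ).not.2 hI)⟩
  refine ⟨ClassGroup.mk0 ⟨N, mem_nonZeroDivisors_iff_ne_zero.2 hN⟩, ?_⟩
  rw [hτ I I' rfl, ← map_mul]
  exact hι _ _ hNI.symm

end Involution

section Localization

variable {R X M : Type*} [CommRing R] [AddCommGroup X] [AddCommGroup M] [Module R X] [Module R M]
  (r : R)

theorem LocalizedModule.map_injective_of_smul_eq_zero (f : X →ₗ[R] M)
    (hf : ∀ x, f x = 0 → r • x = 0) :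
    Function.Injective (LocalizedModule.map (Submonoid.powers r) f) := by
  rw [injective_iff_map_eq_zero]
  intro a ha
  induction a using LocalizedModule.induction_on with | _ x s
  rw [LocalizedModule.map_mk, ← LocalizedModule.zero_mk s, LocalizedModule.mk_eq] at ha
  obtain ⟨u, hu⟩ := ha
  simp only [smul_zero] at hu
  rw [← LocalizedModule.zero_mk s, LocalizedModule.mk_eq]
  refine ⟨⟨r, Submonoid.mem_powers r⟩ * u, ?_⟩
  have h := hf (u • s • x) (by simpa only [Submonoid.smul_def, map_smul] using hu)
  simp only [smul_zero, mul_smul]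
  exact h

theorem LocalizedModule.exists_map_eq_of_fixed (f : X →ₗ[ℤ] M) (τ : M →ₗ[ℤ] M)
    (hf : ∀ m, ∃ x, f x = m + τ m)
    (a : LocalizedModule (Submonoid.powers (2 : ℤ)) M)
    (ha : LocalizedModule.map (Submonoid.powers (2 : ℤ)) τ a = a) :
    ∃ b, LocalizedModule.map (Submonoid.powers (2 : ℤ)) f b = a := by
  induction a using LocalizedModule.induction_on with | _ m s
  obtain ⟨x, hx⟩ := hf m
  let two : Submonoid.powers (2 : ℤ) := ⟨2, Submonoid.mem_powers 2⟩
  refine ⟨LocalizedModule.mk x (two * s), ?_⟩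
  rw [LocalizedModule.map_mk] at ha
  rw [LocalizedModule.mk_eq] at ha
  obtain ⟨u, hu⟩ := ha
  rw [LocalizedModule.map_mk, ← LocalizedModule.mk_cancel_common_left two s m,
    LocalizedModule.mk_eq]
  refine ⟨u, ?_⟩
  have h2 : two • m = m + m := two_smul ℤ m
  rw [hx, h2, mul_smul, mul_smul, smul_comm u two, smul_comm u two]
  simp only [smul_add, hu]

theorem LocalizedModule.map_map_eq_of_fixed (S : Submonoid R) (f : X →ₗ[R] M) (τ : M →ₗ[R] M)
    (hf : ∀ x, τ (f x) = f x) (b : LocalizedModule S X) :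
    LocalizedModule.map S τ (LocalizedModule.map S f b) = LocalizedModule.map S f b := by
  induction b using LocalizedModule.induction_on with | _ x s
  simp only [LocalizedModule.map_mk, hf]

/-- Suppose a group generated by `g` and `g'` acts on `M`, and `f : X → M`, `f' : Y → M` behave,
up to `2`-torsion, like the inclusions of the invariants of `g` and of `g'`. After inverting `2`, the
kernel of `(x, y) ↦ f x + f' y` is identified with the invariants of `M` by `(x, y) ↦ f x`. -/
theorem exists_addEquiv_ker_coprod_fixedPts {G X Y M : Type*} [Monoid G] [AddCommGroup X]
    [AddCommGroup Y] [AddCommGroup M] (T : G → M →ₗ[ℤ] M) (hT1 : ∀ m, T 1 m = m)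
    (hTm : ∀ g h m, T (g * h) m = T g (T h m)) (g g' : G)
    (hgen : ∀ P : G → Prop, P 1 → (∀ a b, P a → P b → P (a * b)) → P g → P g' → ∀ a, P a)
    (f : X →ₗ[ℤ] M) (f' : Y →ₗ[ℤ] M)
    (hker : ∀ x, f x = 0 → (2 : ℤ) • x = 0) (hinv : ∀ x, T g (f x) = f x)
    (hnorm : ∀ m, ∃ x, f x = m + T g m)
    (hker' : ∀ y, f' y = 0 → (2 : ℤ) • y = 0) (hinv' : ∀ y, T g' (f' y) = f' y)
    (hnorm' : ∀ m, ∃ y, f' y = m + T g' m) :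
    ∃ φ : ↥(LinearMap.ker (LinearMap.coprod
        (LocalizedModule.map (Submonoid.powers (2 : ℤ)) f)
        (LocalizedModule.map (Submonoid.powers (2 : ℤ)) f'))) ≃+
      ↥(fixedPts (fun g : G =>
        (LocalizedModule.map (Submonoid.powers (2 : ℤ)) (T g)).toAddMonoidHom)),
      ∀ x (hx : x ∈ LinearMap.ker (LinearMap.coprod
        (LocalizedModule.map (Submonoid.powers (2 : ℤ)) f)
        (LocalizedModule.map (Submonoid.powers (2 : ℤ)) f'))),
        (↑(φ ⟨x, hx⟩) : LocalizedModule (Submonoid.powers (2 : ℤ)) M) =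
          LocalizedModule.map (Submonoid.powers (2 : ℤ)) f x.1 := by
  set S := Submonoid.powers (2 : ℤ)
  have hf : Function.Injective (LocalizedModule.map S f) :=
    LocalizedModule.map_injective_of_smul_eq_zero 2 f hker
  have hf' : Function.Injective (LocalizedModule.map S f') :=
    LocalizedModule.map_injective_of_smul_eq_zero 2 f' hker'
  have hfT : ∀ b, LocalizedModule.map S (T g) (LocalizedModule.map S f b) =
      LocalizedModule.map S f b := LocalizedModule.map_map_eq_of_fixed S f _ hinv
  have hfT' : ∀ b, LocalizedModule.map S (T g') (LocalizedModule.map S f' b) =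
      LocalizedModule.map S f' b := LocalizedModule.map_map_eq_of_fixed S f' _ hinv'
  have hTmul : ∀ g h a, LocalizedModule.map S (T (g * h)) a =
      LocalizedModule.map S (T g) (LocalizedModule.map S (T h) a) := fun u v a => by
    induction a using LocalizedModule.induction_on with | _ m s
    simp only [LocalizedModule.map_mk]
    congr 1
    exact hTm u v m
  have hTone : ∀ a, LocalizedModule.map S (T 1) a = a := fun a => by
    induction a using LocalizedModule.induction_on with | _ m s
    rw [LocalizedModule.map_mk]
    congr 1
    exact hT1 m
  have hfixed : ∀ x ∈ LinearMap.ker (LinearMap.coprod (LocalizedModule.map S f)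
      (LocalizedModule.map S f')), ∀ u,
      LocalizedModule.map S (T u) (LocalizedModule.map S f x.1) = LocalizedModule.map S f x.1 := by
    intro x hx
    rw [LinearMap.mem_ker, LinearMap.coprod_apply, add_eq_zero_iff_eq_neg] at hx
    exact hgen _ (hTone _) (fun a b ha hb => by rw [hTmul, hb, ha])
      (hfT _) (by rw [hx, map_neg, hfT'])
  let ψ := ((LocalizedModule.map S f).comp (LinearMap.fst _ _ _)).toAddMonoidHom.comp
    (LinearMap.ker (LinearMap.coprod (LocalizedModule.map S f)
      (LocalizedModule.map S f'))).subtype.toAddMonoidHom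
  let φ := ψ.codRestrict (fixedPts fun g => (LocalizedModule.map S (T g)).toAddMonoidHom)
    (fun x => hfixed x.1 x.2)
  refine ⟨AddEquiv.ofBijective φ ⟨?_, ?_⟩, fun x hx => rfl⟩
  · rw [injective_iff_map_eq_zero]
    rintro ⟨⟨x, y⟩, hxy⟩ h
    have hx : LocalizedModule.map S f x = 0 := congrArg Subtype.val h
    rw [LinearMap.mem_ker, LinearMap.coprod_apply, hx, zero_add] at hxy
    have hx0 := (map_eq_zero_iff _ hf).1 hx
    have hy0 := (map_eq_zero_iff _ hf').1 hxy
    subst hx0 hy0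
    rfl
  · rintro ⟨a, ha⟩
    obtain ⟨x, hx⟩ := LocalizedModule.exists_map_eq_of_fixed f (T g) hnorm a (ha g)
    obtain ⟨y, hy⟩ := LocalizedModule.exists_map_eq_of_fixed f' (T g') hnorm' a
      (ha g')
    refine ⟨⟨(x, -y), ?_⟩, Subtype.ext hx⟩
    rw [LinearMap.mem_ker, LinearMap.coprod_apply, map_neg, hx, hy, add_neg_cancel]

end Localization

section NumberField

variable {k L : Type*} [Field k] [Field L] [NumberField k] [NumberField L] [Algebra k L]

theorem mem_fixedField_comap_closure_singleton {k L : Type*} [Field k] [Field L] [Algebra k L]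
    {G : Type*} [Group G] (e : (L ≃ₐ[k] L) ≃* G) (s : G) (x : L) :
    x ∈ fixedField ((Subgroup.closure {s}).comap e.toMonoidHom) ↔ e.symm s x = x := by
  rw [mem_fixedField_iff]
  refine ⟨fun h => h _ ?_, fun h f hf => ?_⟩
  · simp
  · have hle : Subgroup.closure {s} ≤
        (MulAction.stabilizer (L ≃ₐ[k] L) x).comap e.symm.toMonoidHom := by
      rw [Subgroup.closure_le, Set.singleton_subset_iff]
      exact h
    have := hle hf
    simpa using this

/-- Class groups of the fixed field of an involution `g`, compared with class groups upstairs: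
the kernel of extension is killed by `2`, extended classes are `g`-invariant, and norms
`c * g c` are extended. -/
theorem classGroup_extension_of_involution (g : L ≃ₐ[k] L) (hg : g * g = 1)
    (F : IntermediateField k L) (hF : ∀ x, x ∈ F ↔ g x = x)
    (ι : ClassGroup (𝓞 ↥F) →* ClassGroup (𝓞 L))
    (hι : ∀ (I : (Ideal (𝓞 ↥F))⁰) (J : (Ideal (𝓞 L))⁰),
      (J : Ideal (𝓞 L)) = Ideal.map (algebraMap (𝓞 ↥F) (𝓞 L)) (I : Ideal (𝓞 ↥F)) →
        ι (ClassGroup.mk0 I) = ClassGroup.mk0 J)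
    (τ : ClassGroup (𝓞 L) →* ClassGroup (𝓞 L))
    (hτ : ∀ I J : (Ideal (𝓞 L))⁰,
      (J : Ideal (𝓞 L)) = Ideal.map (galRestrict (𝓞 k) k L (𝓞 L) g) (I : Ideal (𝓞 L)) →
        τ (ClassGroup.mk0 I) = ClassGroup.mk0 J) :
    (∀ c, ι c = 1 → c ^ 2 = 1) ∧ (∀ c, τ (ι c) = ι c) ∧ ∀ c, ∃ d, ι d = c * τ c := by
  let σ : 𝓞 L →+* 𝓞 L := (galRestrict (𝓞 k) k L (𝓞 L) g : 𝓞 L →+* 𝓞 L)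
  have hσ : ∀ b, algebraMap (𝓞 L) L (σ b) = g (algebraMap (𝓞 L) L b) :=
    algebraMap_galRestrict_apply (𝓞 k) g
  have hinj : Function.Injective (algebraMap (𝓞 L) L) := FaithfulSMul.algebraMap_injective _ _
  have hinv : ∀ b, σ (σ b) = b := fun b => hinj <| by
    rw [hσ, hσ, ← AlgEquiv.mul_apply, hg, AlgEquiv.one_apply]
  have hA : ∀ a, σ (algebraMap (𝓞 F) (𝓞 L) a) = algebraMap (𝓞 F) (𝓞 L) a := fun a => hinj <| by
    rw [hσ]
    exact (hF _).1 (algebraMap (𝓞 F) F a).2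
  have hfix : ∀ b, σ b = b → ∃ a, algebraMap (𝓞 F) (𝓞 L) a = b := fun b hb => by
    have hbF : algebraMap (𝓞 L) L b ∈ F := (hF _).2 (by rw [← hσ, hb])
    have hint : IsIntegral ℤ (⟨algebraMap (𝓞 L) L b, hbF⟩ : F) := by
      rw [← isIntegral_algebraMap_iff (FaithfulSMul.algebraMap_injective F L)]
      exact b.2
    exact ⟨⟨_, hint⟩, hinj rfl⟩
  exact ⟨sq_eq_one_of_extension_eq_one σ hinv hfix hA ι hι,
    action_extension_eq σ hA ι hι τ hτ,
    exists_extension_eq_mul_action σ hinv hfix ι hι τ hτ⟩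

theorem act_mul_of_mk0 (act : (L ≃ₐ[k] L) → ClassGroup (𝓞 L) →* ClassGroup (𝓞 L))
    (hact : ∀ (g : L ≃ₐ[k] L) (I J : (Ideal (𝓞 L))⁰),
      (J : Ideal (𝓞 L)) = Ideal.map (galRestrict (𝓞 k) k L (𝓞 L) g) (I : Ideal (𝓞 L)) →
        act g (ClassGroup.mk0 I) = ClassGroup.mk0 J)
    (g h : L ≃ₐ[k] L) (c : ClassGroup (𝓞 L)) : act (g * h) c = act g (act h c) := by
  have hne : ∀ (g : L ≃ₐ[k] L) (I : (Ideal (𝓞 L))⁰),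
      Ideal.map (galRestrict (𝓞 k) k L (𝓞 L) g) (I : Ideal (𝓞 L)) ∈ (Ideal (𝓞 L))⁰ :=
    fun g I => mem_nonZeroDivisors_iff_ne_zero.2 <|
      (Ideal.map_eq_bot_iff_of_injective (galRestrict (𝓞 k) k L (𝓞 L) g).injective).not.2
        (mem_nonZeroDivisors_iff_ne_zero.1 I.2)
  obtain ⟨I, rfl⟩ := ClassGroup.mk0_surjective c
  rw [hact h I ⟨_, hne h I⟩ rfl, hact g _ ⟨_, hne g ⟨_, hne h I⟩⟩ rfl]
  refine hact _ _ _ ?_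
  change Ideal.map (galRestrict (𝓞 k) k L (𝓞 L) g : 𝓞 L →+* 𝓞 L)
    (Ideal.map (galRestrict (𝓞 k) k L (𝓞 L) h : 𝓞 L →+* 𝓞 L) I.1) =
    Ideal.map (galRestrict (𝓞 k) k L (𝓞 L) (g * h) : 𝓞 L →+* 𝓞 L) I.1
  rw [Ideal.map_map, map_mul]
  rfl

theorem act_one_of_mk0 (τ : ClassGroup (𝓞 L) →* ClassGroup (𝓞 L))
    (hτ : ∀ I J : (Ideal (𝓞 L))⁰,
      (J : Ideal (𝓞 L)) = Ideal.map (galRestrict (𝓞 k) k L (𝓞 L) 1) (I : Ideal (𝓞 L)) →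
        τ (ClassGroup.mk0 I) = ClassGroup.mk0 J)
    (c : ClassGroup (𝓞 L)) : τ c = c := by
  obtain ⟨I, rfl⟩ := ClassGroup.mk0_surjective c
  refine hτ I I ?_
  rw [map_one]
  exact (Ideal.map_id I.1).symm

end NumberField

/-- The reflections `sr 0` and `sr 1` generate the dihedral group. -/
theorem DihedralGroup.induction_reflections {q : ℕ} [NeZero q] (P : DihedralGroup q → Prop)
    (h1 : P 1) (hmul : ∀ a b, P a → P b → P (a * b)) (h0 : P (sr 0)) (hs : P (sr 0 * r 1))
    (d : DihedralGroup q) : P d := by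
  have hr1 : P (r 1) := by
    have := hmul _ _ h0 hs
    simpa using this
  have hpow : ∀ n : ℕ, P (r 1 ^ n) := fun n => by
    induction n with
    | zero => simpa using h1
    | succ n ih => rw [pow_succ]; exact hmul _ _ ih hr1
  have hr : ∀ i : ZMod q, P (r i) := fun i => by
    have := hpow i.val
    rwa [r_one_pow, ZMod.natCast_zmod_val] at this
  cases d with
  | r i => exact hr i
  | sr i =>
    have := hmul _ _ h0 (hr i)
    simpa using this

/-- Let `L/k` be a dihedral extension of number fields of degree `2q`
(`q` odd), `K = L^Σ`, `K' = L^Σ'` the fixed fields of two distinct order-2 subgroups, and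
`η : Cl(K) ⊕ Cl(K') → Cl(L)` the map given by extension of ideals.  After tensoring with
`ℤ[1/2]`, the kernel of `η` is isomorphic to `(Cl(L) ⊗ ℤ[1/2])^D`, via
`(c, c') ↦ i_{L/K}(c)`.

The ideal-extension maps `ιK, ιK'` on class groups and the Galois action `act` on
`Cl(L)` are characterised in terms of `ClassGroup.mk0` of integral ideals. -/
theorem ker_eta_iso_fixed_classgroup (q : ℕ) [NeZero q] (hq : Odd q)
    (k L : Type*) [Field k] [Field L] [NumberField k] [NumberField L]
    [Algebra k L] [IsGalois k L]
    (e : (L ≃ₐ[k] L) ≃* DihedralGroup q)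
    (K K' : IntermediateField k L)
    (hK : K = fixedField ((Subgroup.closure {(sr 0 : DihedralGroup q)}).comap e.toMonoidHom))
    (hK' : K' = fixedField
      ((Subgroup.closure {(sr 0 * r 1 : DihedralGroup q)}).comap e.toMonoidHom))
    (ιK : ClassGroup (𝓞 ↥K) →* ClassGroup (𝓞 L))
    (hιK : ∀ (I : (Ideal (𝓞 ↥K))⁰) (J : (Ideal (𝓞 L))⁰),
      (J : Ideal (𝓞 L)) = Ideal.map (algebraMap (𝓞 ↥K) (𝓞 L)) (I : Ideal (𝓞 ↥K)) →
        ιK (ClassGroup.mk0 I) = ClassGroup.mk0 J)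
    (ιK' : ClassGroup (𝓞 ↥K') →* ClassGroup (𝓞 L))
    (hιK' : ∀ (I : (Ideal (𝓞 ↥K'))⁰) (J : (Ideal (𝓞 L))⁰),
      (J : Ideal (𝓞 L)) = Ideal.map (algebraMap (𝓞 ↥K') (𝓞 L)) (I : Ideal (𝓞 ↥K')) →
        ιK' (ClassGroup.mk0 I) = ClassGroup.mk0 J)
    (act : (L ≃ₐ[k] L) → ClassGroup (𝓞 L) →* ClassGroup (𝓞 L))
    (hact : ∀ (g : L ≃ₐ[k] L) (I J : (Ideal (𝓞 L))⁰),
      (J : Ideal (𝓞 L)) = Ideal.map (galRestrict (𝓞 k) k L (𝓞 L) g) (I : Ideal (𝓞 L)) →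
        act g (ClassGroup.mk0 I) = ClassGroup.mk0 J) :
    ∃ φ :
      ↥(LinearMap.ker (LinearMap.coprod
        (LocalizedModule.map (Submonoid.powers (2 : ℤ))
          (MonoidHom.toAdditive ιK).toIntLinearMap)
        (LocalizedModule.map (Submonoid.powers (2 : ℤ))
          (MonoidHom.toAdditive ιK').toIntLinearMap))) ≃+
      ↥(fixedPts (fun g : L ≃ₐ[k] L =>
        (LocalizedModule.map (Submonoid.powers (2 : ℤ))
          (MonoidHom.toAdditive (act g)).toIntLinearMap).toAddMonoidHom)),
      ∀ x (hx : x ∈ LinearMap.ker (LinearMap.coprod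
        (LocalizedModule.map (Submonoid.powers (2 : ℤ))
          (MonoidHom.toAdditive ιK).toIntLinearMap)
        (LocalizedModule.map (Submonoid.powers (2 : ℤ))
          (MonoidHom.toAdditive ιK').toIntLinearMap))),
        (↑(φ ⟨x, hx⟩) : LocalizedModule (Submonoid.powers (2 : ℤ))
            (Additive (ClassGroup (𝓞 L)))) =
          LocalizedModule.map (Submonoid.powers (2 : ℤ))
            (MonoidHom.toAdditive ιK).toIntLinearMap x.1 := by
  have hs0 : e.symm (sr 0) * e.symm (sr 0) = 1 := by rw [← map_mul]; simp
  have hs1 : e.symm (sr 0 * r 1) * e.symm (sr 0 * r 1) = 1 := by rw [← map_mul]; simp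
  obtain ⟨hker, hinv, hnorm⟩ := classGroup_extension_of_involution (e.symm (sr 0)) hs0 K
    (fun x => by rw [hK, mem_fixedField_comap_closure_singleton]) ιK hιK _ (hact _)
  obtain ⟨hker', hinv', hnorm'⟩ := classGroup_extension_of_involution (e.symm (sr 0 * r 1)) hs1 K'
    (fun x => by rw [hK', mem_fixedField_comap_closure_singleton]) ιK' hιK' _ (hact _)
  refine exists_addEquiv_ker_coprod_fixedPts (fun g => (MonoidHom.toAdditive (act g)).toIntLinearMap)
    (act_one_of_mk0 (act 1) (hact 1)) (act_mul_of_mk0 act hact) (e.symm (sr 0))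
    (e.symm (sr 0 * r 1)) (fun P h1 hmul h0 hs g => ?_) _ _ hker hinv hnorm hker' hinv' hnorm'
  have hg := DihedralGroup.induction_reflections (fun d => P (e.symm d)) (by rwa [map_one])
    (fun a b ha hb => by rw [map_mul]; exact hmul _ _ ha hb) h0 hs (e g)
  rwa [e.symm_apply_apply] at hg
end

section
/- Let L/k be a dihedral extension of number fields of degree 2q with q odd, F the quadratic subextension and K, K' the fixed fields of two distinct order-2 subgroups. Then there is an isomorphism of 2-primary parts: (Cl(L)/i_{L/F}Cl(F))₂ ≅ (Cl(K)/i_{K/k}Cl(k))₂ ⊕ (Cl(K')/i_{K'/k}Cl(k))₂, where ( )₂ denotes the 2-primary component and i denotes extension of ideals on class groups. -/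
open DihedralGroup NumberField IntermediateField
open scoped nonZeroDivisors

/-- The 2-primary component of a commutative group. -/
def mprimary2 (A : Type*) [CommGroup A] : Subgroup A where
  carrier := {x | ∃ n : ℕ, x ^ (2 ^ n) = 1}
  one_mem' := ⟨0, one_pow _⟩
  mul_mem' := by
    rintro x y ⟨n, hn⟩ ⟨m, hm⟩
    refine ⟨n + m, ?_⟩
    have hx : x ^ 2 ^ (n + m) = 1 := by
      rw [pow_add, pow_mul, hn, one_pow]
    have hy : y ^ 2 ^ (n + m) = 1 := by
      rw [pow_add, mul_comm, pow_mul, hm, one_pow]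
    rw [mul_pow, hx, hy, mul_one]
  inv_mem' := by rintro x ⟨n, hn⟩; exact ⟨n, by rw [inv_pow, hn, inv_one]⟩

/-- The weighted product of the rotates of an element, `x ↦ ∏ m ∈ {1, …, q}, (r (ε m) • x) ^ m`,
for a family `T` of endomorphisms indexed by a dihedral group. -/
def weightedRotation {q : ℕ} {A : Type*} [CommGroup A] (T : DihedralGroup q → A →* A)
    (ε : (ZMod q)ˣ) : A →* A :=
  ∏ m ∈ Finset.range q, T (r ((ε : ZMod q) * ((m + 1 : ℕ) : ZMod q))) ^ (m + 1)

/-- Transfer maps `i : B → A`, `N : A → B` attached to the subgroup generated by the reflection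
`sr t` of a dihedral group acting on `A` through `T`; the subgroup `R` of `B` plays the role of
the classes coming from the base. -/
structure ReflectionTransfer {q : ℕ} [NeZero q] {A B : Type*} [CommGroup A] [CommGroup B]
    (T : DihedralGroup q → A →* A) (t : ZMod q) (i : B →* A) (N : A →* B) (R : Subgroup B) :
    Prop where
  smul_incl : ∀ b, T (sr t) (i b) = i b
  norm_smul : ∀ x, N (T (sr t) x) = N x
  incl_norm : ∀ x, i (N x) = x * T (sr t) x
  norm_incl : ∀ b, N (i b) = b ^ 2
  norm_rotations_mem : ∀ x, N (∏ z : ZMod q, T (r z) x) ∈ R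
  half_norm_mem : ∀ b, b * ∏ m ∈ Finset.range (q / 2), N (T (r ((m + 1 : ℕ) : ZMod q)) (i b)) ∈ R

section Combinatorics

variable {B : Type*} [CommGroup B]

theorem prod_range_succ_cast_eq_prod_zmod {M : Type*} [CommMonoid M] {q : ℕ} [NeZero q]
    (g : ZMod q → M) :
    ∏ m ∈ Finset.range q, g ((m + 1 : ℕ) : ZMod q) = ∏ z : ZMod q, g z := by
  rw [← Equiv.prod_comp (Equiv.addRight (1 : ZMod q)) g]
  obtain ⟨n, rfl⟩ := Nat.exists_eq_succ_of_ne_zero (NeZero.ne q)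
  have h := Fin.prod_univ_eq_prod_range (fun m : ℕ => g ((m + 1 : ℕ) : ZMod (n + 1))) (n + 1)
  rw [← h]
  refine Finset.prod_congr rfl fun z _ => ?_
  congr 1
  push_cast
  congr 1
  exact ZMod.natCast_zmod_val (n := n + 1) z

theorem prod_range_of_even {M : Type*} [CommMonoid M] {q : ℕ} (hq : Odd q) (f : ZMod q → M)
    (hf : ∀ z, f (-z) = f z) :
    ∏ m ∈ Finset.range q, f ((m + 1 : ℕ) : ZMod q) =
      f 0 * (∏ m ∈ Finset.range (q / 2), f ((m + 1 : ℕ) : ZMod q)) ^ 2 := by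
  obtain ⟨h, hh⟩ := hq
  have h0 : ((2 * h + 1 : ℕ) : ZMod q) = 0 := by rw [← hh]; exact ZMod.natCast_self q
  have key : ∏ m ∈ Finset.range (2 * h + 1), f ((m + 1 : ℕ) : ZMod q) =
      f 0 * (∏ m ∈ Finset.range h, f ((m + 1 : ℕ) : ZMod q)) ^ 2 := by
    rw [Finset.prod_range_succ, h0, mul_comm, two_mul, Finset.prod_range_add,
      ← Finset.prod_range_reflect (fun m => f ((h + m + 1 : ℕ) : ZMod q)) h, pow_two]
    congr 2
    refine Finset.prod_congr rfl fun m hm => ?_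
    have hm := Finset.mem_range.1 hm
    rw [← hf]
    congr 1
    rw [neg_eq_iff_add_eq_zero, ← Nat.cast_add, ← h0]
    congr 1
    omega
  rw [show q / 2 = h by omega]
  nth_rw 1 [hh]
  exact key

theorem prod_range_pow_of_even {q h : ℕ} (hq : q = 2 * h + 1) (f : ZMod q → B)
    (hf : ∀ z, f (-z) = f z) :
    ∏ m ∈ Finset.range q, f ((m + 1 : ℕ) : ZMod q) ^ (m + 1) =
      f 0 ^ q * (∏ m ∈ Finset.range h, f ((m + 1 : ℕ) : ZMod q)) ^ q := by
  have h0 : ((2 * h + 1 : ℕ) : ZMod q) = 0 := by rw [← hq]; exact ZMod.natCast_self q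
  have key : ∏ m ∈ Finset.range (2 * h + 1), f ((m + 1 : ℕ) : ZMod q) ^ (m + 1) =
      f 0 ^ (2 * h + 1) * (∏ m ∈ Finset.range h, f ((m + 1 : ℕ) : ZMod q)) ^ (2 * h + 1) := by
    rw [Finset.prod_range_succ, h0, mul_comm, two_mul, Finset.prod_range_add,
      ← Finset.prod_range_reflect (fun m => f ((h + m + 1 : ℕ) : ZMod q) ^ (h + m + 1)) h,
      ← Finset.prod_mul_distrib, ← Finset.prod_pow]
    congr 1
    refine Finset.prod_congr rfl fun m hm => ?_
    have hm := Finset.mem_range.1 hm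
    have e : ((h + (h - 1 - m) + 1 : ℕ) : ZMod q) = -((m + 1 : ℕ) : ZMod q) := by
      rw [eq_neg_iff_add_eq_zero, ← Nat.cast_add, ← h0]
      congr 1
      omega
    rw [e, hf, ← pow_add]
    congr 1
    omega
  subst hq
  exact key

theorem prod_range_pow_of_reflect {q h : ℕ} (hq : q = 2 * h + 1) (g : ZMod q → B)
    (hg : ∀ z, g (1 - z) = g z) :
    ∏ m ∈ Finset.range q, g ((m + 1 : ℕ) : ZMod q) ^ (m + 1) =
      (∏ m ∈ Finset.range q, g ((m + 1 : ℕ) : ZMod q)) ^ (h + 1) := by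
  have h0 : ((2 * h + 1 : ℕ) : ZMod q) = 0 := by rw [← hq]; exact ZMod.natCast_self q
  have e : ∀ m ∈ Finset.range h,
      g ((h + 1 + (h - 1 - m) + 1 : ℕ) : ZMod q) = g ((m + 1 : ℕ) : ZMod q) := by
    intro m hm
    have hm := Finset.mem_range.1 hm
    rw [← hg ((m + 1 : ℕ) : ZMod q)]
    congr 1
    rw [eq_sub_iff_add_eq, ← Nat.cast_add,
      show h + 1 + (h - 1 - m) + 1 + (m + 1) = (2 * h + 1) + 1 by omega, Nat.cast_add, h0]
    simp
  have key : ∏ m ∈ Finset.range (h + 1 + h), g ((m + 1 : ℕ) : ZMod q) ^ (m + 1) =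
      (∏ m ∈ Finset.range (h + 1 + h), g ((m + 1 : ℕ) : ZMod q)) ^ (h + 1) := by
    rw [Finset.prod_range_add _ (h + 1), Finset.prod_range_add _ (h + 1),
      Finset.prod_range_succ _ h, Finset.prod_range_succ _ h,
      ← Finset.prod_range_reflect (fun m => g ((h + 1 + m + 1 : ℕ) : ZMod q) ^ (h + 1 + m + 1)) h,
      ← Finset.prod_range_reflect (fun m => g ((h + 1 + m + 1 : ℕ) : ZMod q)) h,
      mul_right_comm, mul_right_comm (∏ x ∈ Finset.range h, g ((x + 1 : ℕ) : ZMod q)),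
      ← Finset.prod_mul_distrib, ← Finset.prod_mul_distrib, mul_pow, ← Finset.prod_pow]
    congr 1
    refine Finset.prod_congr rfl fun m hm => ?_
    rw [e m hm, ← pow_add, ← pow_two, ← pow_mul]
    have hm := Finset.mem_range.1 hm
    congr 1
    omega
  have hq' : q = h + 1 + h := by omega
  subst hq'
  exact key

theorem prod_range_pow_mul_neg {q h : ℕ} [NeZero q] (hq : q = 2 * h + 1) (p : ZMod q → B) :
    ∏ m ∈ Finset.range q, (p ((m + 1 : ℕ) : ZMod q) * p (-((m + 1 : ℕ) : ZMod q))) ^ (m + 1) =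
      p 0 ^ q * (∏ z, p z) ^ q := by
  have h0 : ((2 * h + 1 : ℕ) : ZMod q) = 0 := by rw [← hq]; exact ZMod.natCast_self q
  rw [← prod_range_succ_cast_eq_prod_zmod p]
  have key : ∏ m ∈ Finset.range (2 * h + 1),
      (p ((m + 1 : ℕ) : ZMod q) * p (-((m + 1 : ℕ) : ZMod q))) ^ (m + 1) =
      p 0 ^ (2 * h + 1) *
        (∏ m ∈ Finset.range (2 * h + 1), p ((m + 1 : ℕ) : ZMod q)) ^ (2 * h + 1) := by
    simp_rw [mul_pow, Finset.prod_mul_distrib]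
    rw [Finset.prod_range_succ _ (2 * h), Finset.prod_range_succ _ (2 * h),
      Finset.prod_range_succ _ (2 * h), h0, neg_zero, mul_mul_mul_comm,
      ← Finset.prod_range_reflect (fun m => p (-((m + 1 : ℕ) : ZMod q)) ^ (m + 1)),
      ← Finset.prod_mul_distrib, mul_pow, ← Finset.prod_pow, ← mul_assoc, mul_comm]
    congr 2
    refine Finset.prod_congr rfl fun m hm => ?_
    have hm := Finset.mem_range.1 hm
    have e : -((2 * h - 1 - m + 1 : ℕ) : ZMod q) = ((m + 1 : ℕ) : ZMod q) := by
      rw [neg_eq_iff_add_eq_zero, ← Nat.cast_add, ← h0]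
      congr 1
      omega
    rw [e, ← pow_add]
    congr 1
    omega
  subst hq
  exact key

theorem prod_range_pow_mul_reflect {q : ℕ} [NeZero q] (w : ZMod q → B) :
    ∏ m ∈ Finset.range q,
      (w ((m + 1 : ℕ) : ZMod q) * w (1 - ((m + 1 : ℕ) : ZMod q))) ^ (m + 1) =
      (∏ z, w z) ^ (q + 1) := by
  rw [← prod_range_succ_cast_eq_prod_zmod w]
  simp_rw [mul_pow, Finset.prod_mul_distrib]
  rw [← Finset.prod_range_reflect (fun m => w (1 - ((m + 1 : ℕ) : ZMod q)) ^ (m + 1)) q,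
    ← Finset.prod_mul_distrib, ← Finset.prod_pow]
  refine Finset.prod_congr rfl fun m hm => ?_
  have hm := Finset.mem_range.1 hm
  have e : 1 - ((q - 1 - m + 1 : ℕ) : ZMod q) = ((m + 1 : ℕ) : ZMod q) := by
    rw [sub_eq_iff_eq_add, ← Nat.cast_add, show m + 1 + (q - 1 - m + 1) = q + 1 by omega]
    simp
  rw [e, ← pow_add]
  congr 1
  omega

end Combinatorics

section Transfer

variable {q : ℕ} {A B B' : Type*} [CommGroup A] [CommGroup B] [CommGroup B']
  {T : DihedralGroup q → A →* A}

theorem weightedRotation_apply (ε : (ZMod q)ˣ) (x : A) :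
    weightedRotation T ε x =
      ∏ m ∈ Finset.range q, T (r ((ε : ZMod q) * ((m + 1 : ℕ) : ZMod q))) x ^ (m + 1) := by
  simp [weightedRotation, MonoidHom.finsetProd_apply]

variable [NeZero q] {t : ZMod q} {i : B →* A} {N : A →* B} {R : Subgroup B}

theorem ReflectionTransfer.norm_weightedRotation_mem (D : ReflectionTransfer T t i N R)
    (hq : Odd q) (ε : (ZMod q)ˣ) (x : A)
    (hx : ∀ z, N (T (r ((ε : ZMod q) * (1 - z))) x) = N (T (r ((ε : ZMod q) * z)) x)) :
    N (weightedRotation T ε x) ∈ R := by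
  obtain ⟨h, hh⟩ := hq
  rw [weightedRotation_apply, map_prod]
  simp_rw [map_pow]
  rw [prod_range_pow_of_reflect hh (fun z => N (T (r ((ε : ZMod q) * z)) x)) hx,
    prod_range_succ_cast_eq_prod_zmod (fun z => N (T (r ((ε : ZMod q) * z)) x)),
    show ∏ z, N (T (r ((ε : ZMod q) * z)) x) = ∏ z, N (T (r z) x) from
      Equiv.prod_comp (Units.mulLeft ε) (fun z => N (T (r z) x)), ← map_prod]
  exact pow_mem (D.norm_rotations_mem x) _

theorem ReflectionTransfer.norm_weightedRotation_incl (D : ReflectionTransfer T t i N R)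
    (hT : ∀ a b x, T (a * b) x = T a (T b x)) (hT1 : ∀ x, T 1 x = x)
    (hq : Odd q) (ε : (ZMod q)ˣ) (hε : ε = 1 ∨ ε = -1) (b : B) :
    ∃ c ∈ R, N (weightedRotation T ε (i b)) = b ^ q * c := by
  obtain ⟨h, hh⟩ := hq
  have hev : ∀ z, N (T (r (-z)) (i b)) = N (T (r z) (i b)) := by
    intro z
    rw [← D.norm_smul (T (r z) (i b)), ← hT, sr_mul_r,
      show sr (t + z) = r (-z) * sr t by simp [r_mul_sr],
      hT, D.smul_incl]
  have hhalf : q / 2 = h := by omega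
  have hε' : ∀ z, N (T (r ((ε : ZMod q) * z)) (i b)) = N (T (r z) (i b)) := by
    rcases hε with rfl | rfl
    · simp
    · intro z
      simpa using hev z
  refine ⟨_, pow_mem (D.half_norm_mem b) q, ?_⟩
  rw [weightedRotation_apply, map_prod]
  simp_rw [map_pow, hε']
  rw [prod_range_pow_of_even hh (fun z => N (T (r z) (i b))) hev, r_zero, hT1, D.norm_incl, hhalf,
    mul_pow, ← mul_assoc, pow_two, mul_pow]

theorem ReflectionTransfer.norm_weightedRotation_incl_mem (D : ReflectionTransfer T t i N R)
    (hT : ∀ a b x, T (a * b) x = T a (T b x))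
    {t' : ZMod q} {i' : B' →* A} {N' : A →* B'} {R' : Subgroup B'}
    (D' : ReflectionTransfer T t' i' N' R')
    (hq : Odd q) (ε : (ZMod q)ˣ) (hε : (ε : ZMod q) = t' - t) (b : B') :
    N (weightedRotation T ε (i' b)) ∈ R := by
  refine D.norm_weightedRotation_mem hq ε _ fun z => ?_
  rw [← D.norm_smul (T (r ((ε : ZMod q) * z)) (i' b)), ← hT, sr_mul_r,
    show sr (t + (ε : ZMod q) * z) = r ((ε : ZMod q) * (1 - z)) * sr t' by
      rw [r_mul_sr]; congr 1; rw [mul_sub, mul_one, hε]; ring,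
    hT, D'.smul_incl]

theorem ReflectionTransfer.incl_norm_mul_incl_norm
    (hT : ∀ a b x, T (a * b) x = T a (T b x)) (hT1 : ∀ x, T 1 x = x)
    (D : ReflectionTransfer T 0 i N R)
    {i' : B' →* A} {N' : A →* B'} {R' : Subgroup B'} (D' : ReflectionTransfer T 1 i' N' R')
    (hq : Odd q) (Q : Subgroup A) (hQ : ∀ x, ∏ z : ZMod q, T (r z) x ∈ Q) (x : A) :
    ∃ c ∈ Q, i (N (weightedRotation T 1 x)) * i' (N' (weightedRotation T (-1) x)) = x ^ q * c := by
  obtain ⟨h, hh⟩ := hq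
  have hw : ∏ z : ZMod q, T (sr z) x ∈ Q := by
    rw [← Equiv.prod_comp (Equiv.neg (ZMod q))]
    convert! hQ (T (sr 0) x) using 2 with z
    rw [← hT]
    simp
  refine ⟨_, mul_mem (pow_mem (hQ x) q) (pow_mem hw (q + 1)), ?_⟩
  rw [D.incl_norm, D'.incl_norm, ← mul_assoc, ← mul_assoc, ← prod_range_pow_mul_reflect,
    show x ^ q = T (r 0) x ^ q by rw [r_zero, hT1],
    ← prod_range_pow_mul_neg hh fun z => T (r z) x]
  simp_rw [weightedRotation_apply, map_prod, map_pow, ← hT, mul_pow, Finset.prod_mul_distrib]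
  simp [sub_eq_add_neg]
  simp only [mul_assoc, mul_left_comm]

end Transfer

/-- Homomorphisms that compose to the `q`-th power in both directions, `q` odd, identify the
`2`-primary components. -/
theorem nonempty_mprimary2_equiv {A B : Type*} [CommGroup A] [CommGroup B] {q : ℕ} (hq : Odd q)
    (f : A →* B) (g : B →* A) (hfg : ∀ b, f (g b) = b ^ q) (hgf : ∀ a, g (f a) = a ^ q) :
    Nonempty (mprimary2 A ≃* mprimary2 B) := by
  let f' : mprimary2 A →* mprimary2 B := (f.comp (mprimary2 A).subtype).codRestrict _ (by
    rintro ⟨a, n, hn⟩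
    exact ⟨n, by simp [← map_pow, hn]⟩)
  refine ⟨MulEquiv.ofBijective f' ⟨?_, ?_⟩⟩
  · rw [injective_iff_map_eq_one]
    rintro ⟨a, n, hn⟩ ha
    have ha' : f a = 1 := congrArg Subtype.val ha
    have h1 : a ^ q = 1 := by rw [← hgf, ha', map_one]
    ext
    have hcop : Nat.Coprime q (2 ^ n) := (Nat.Coprime.pow_right n hq.coprime_two_right)
    have := pow_gcd_eq_one.2 ⟨h1, hn⟩
    rwa [hcop, pow_one] at this
  · rintro ⟨b, n, hn⟩
    have hcop : Nat.Coprime q (2 ^ n) := (Nat.Coprime.pow_right n hq.coprime_two_right)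
    obtain ⟨m, hm⟩ : ∃ m : ℤ, b ^ ((q : ℤ) * m) = b := by
      refine ⟨Nat.gcdA q (2 ^ n), ?_⟩
      have h := Nat.gcd_eq_gcd_ab q (2 ^ n)
      rw [hcop] at h
      have h2 : b ^ (((2 ^ n : ℕ) : ℤ) * Nat.gcdB q (2 ^ n)) = 1 := by
        rw [zpow_mul, zpow_natCast, hn, one_zpow]
      calc b ^ ((q : ℤ) * Nat.gcdA q (2 ^ n))
          = b ^ ((q : ℤ) * Nat.gcdA q (2 ^ n) + ((2 ^ n : ℕ) : ℤ) * Nat.gcdB q (2 ^ n)) := by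
            rw [zpow_add, h2, mul_one]
        _ = b := by rw [← h]; simp
    refine ⟨⟨g b ^ m, n, ?_⟩, ?_⟩
    · rw [← zpow_natCast, zpow_comm, zpow_natCast, ← map_pow, hn, map_one, one_zpow]
    · ext
      change f (g b ^ m) = b
      rw [map_zpow, hfg, ← zpow_natCast, ← zpow_mul, hm]

theorem mprimary2_prod_equiv (A B : Type*) [CommGroup A] [CommGroup B] :
    Nonempty (mprimary2 (A × B) ≃* mprimary2 A × mprimary2 B) := by
  have h : mprimary2 (A × B) = (mprimary2 A).prod (mprimary2 B) := by
    ext ⟨a, b⟩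
    rw [Subgroup.mem_prod]
    constructor
    · rintro ⟨n, hn⟩
      exact ⟨⟨n, congrArg Prod.fst hn⟩, ⟨n, congrArg Prod.snd hn⟩⟩
    · rintro ⟨⟨n, hn⟩, ⟨m, hm⟩⟩
      refine ⟨n + m, Prod.ext ?_ ?_⟩
      · change a ^ 2 ^ (n + m) = 1
        rw [pow_add, pow_mul, hn, one_pow]
      · change b ^ 2 ^ (n + m) = 1
        rw [pow_add, mul_comm, pow_mul, hm, one_pow]
  rw [h]
  exact ⟨Subgroup.prodEquiv _ _⟩

theorem ReflectionTransfer.nonempty_mprimary2_equiv {q : ℕ} [NeZero q] (hq : Odd q)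
    {A B B' : Type*} [CommGroup A] [CommGroup B] [CommGroup B'] {T : DihedralGroup q → A →* A}
    (hT : ∀ a b x, T (a * b) x = T a (T b x)) (hT1 : ∀ x, T 1 x = x)
    {i : B →* A} {N : A →* B} {R : Subgroup B} (D : ReflectionTransfer T 0 i N R)
    {i' : B' →* A} {N' : A →* B'} {R' : Subgroup B'} (D' : ReflectionTransfer T 1 i' N' R')
    (Q : Subgroup A) (hQ : ∀ x, ∏ z : ZMod q, T (r z) x ∈ Q)
    (hQfix : ∀ x ∈ Q, ∀ z, T (r z) x = x) (hR : ∀ b ∈ R, i b ∈ Q) (hR' : ∀ b ∈ R', i' b ∈ Q) :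
    Nonempty (mprimary2 (A ⧸ Q) ≃* mprimary2 (B ⧸ R) × mprimary2 (B' ⧸ R')) := by
  let φ : (B ⧸ R) × (B' ⧸ R') →* A ⧸ Q :=
    (QuotientGroup.map R Q i hR).coprod (QuotientGroup.map R' Q i' hR')
  let ψ : A ⧸ Q →* (B ⧸ R) × (B' ⧸ R') :=
    (QuotientGroup.map Q R (N.comp (weightedRotation T 1)) fun x hx =>
      D.norm_weightedRotation_mem hq 1 x fun z => by rw [hQfix x hx, hQfix x hx]).prod
    (QuotientGroup.map Q R' (N'.comp (weightedRotation T (-1))) fun x hx =>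
      D'.norm_weightedRotation_mem hq (-1) x fun z => by rw [hQfix x hx, hQfix x hx])
  obtain ⟨E⟩ := mprimary2_prod_equiv (B ⧸ R) (B' ⧸ R')
  refine (_root_.nonempty_mprimary2_equiv hq ψ φ ?_ ?_).map fun E' => E'.trans E
  · rintro ⟨⟨b⟩, ⟨b'⟩⟩
    refine Prod.ext ?_ ?_
    · change ((N (weightedRotation T 1 (i b * i' b')) : B) : B ⧸ R) = ((b ^ q : B) : B ⧸ R)
      obtain ⟨c, hc, h⟩ := D.norm_weightedRotation_incl hT hT1 hq 1 (.inl rfl) b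
      have h' := D.norm_weightedRotation_incl_mem hT D' hq 1 (by simp) b'
      rw [map_mul, map_mul, h, eq_comm, QuotientGroup.eq, mul_assoc, inv_mul_cancel_left]
      exact mul_mem hc h'
    · change ((N' (weightedRotation T (-1) (i b * i' b')) : B') : B' ⧸ R') =
        ((b' ^ q : B') : B' ⧸ R')
      obtain ⟨c, hc, h⟩ := D'.norm_weightedRotation_incl hT hT1 hq (-1) (.inr rfl) b'
      have h' := D'.norm_weightedRotation_incl_mem hT D hq (-1) (by simp) b
      rw [map_mul, map_mul, h, mul_left_comm, eq_comm, QuotientGroup.eq, inv_mul_cancel_left]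
      exact mul_mem h' hc
  · rintro ⟨x⟩
    change ((i (N (weightedRotation T 1 x)) * i' (N' (weightedRotation T (-1) x)) : A) : A ⧸ Q) =
      ((x ^ q : A) : A ⧸ Q)
    obtain ⟨c, hc, h⟩ := D.incl_norm_mul_incl_norm hT hT1 D' hq Q hQ x
    rw [h, eq_comm, QuotientGroup.eq, inv_mul_cancel_left]
    exact hc

section RelNorm

open Pointwise

theorem Ideal.map_relNorm_eq_prod_smul {A B : Type*} (G : Type*) [CommRing A] [CommRing B]
    [IsDedekindDomain A] [IsDedekindDomain B] [Algebra A B] [Module.Finite A B]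
    [Module.IsTorsionFree A B] [Group G] [Fintype G] [MulSemiringAction G B]
    [IsGaloisGroup G A B] (I : Ideal B) :
    (Ideal.relNorm A I).map (algebraMap A B) = ∏ g : G, g • I := by
  have hx (x : B) : algebraMap A B (Algebra.intNorm A B x) = ∏ g : G, g • x := by
    let := FractionRing.liftAlgebra A (FractionRing B)
    let := IsFractionRing.mulSemiringAction G B (FractionRing B)
    have : IsGalois (FractionRing A) (FractionRing B) := IsGaloisGroup.isGalois G _ _
    rw [Algebra.algebraMap_intNorm_of_isGalois,
      ← Equiv.prod_comp (IsGaloisGroup.mulEquivAlgEquiv G A B).toEquiv]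
    rfl
  have hdvd : ∏ g : G, g • I ∣ (Ideal.relNorm A I).map (algebraMap A B) := by
    rw [Ideal.dvd_iff_le, Ideal.map_relNorm, Ideal.span_le]
    rintro _ ⟨x, hxI, rfl⟩
    rw [Function.comp_apply, hx]
    exact Ideal.prod_mem_prod fun g _ => Ideal.smul_mem_pointwise_smul g x I hxI
  obtain rfl | hI := eq_or_ne I ⊥
  · rw [Ideal.relNorm_bot, Ideal.map_bot, ← Ideal.zero_eq_bot, eq_comm]
    exact Finset.prod_eq_zero (Finset.mem_univ 1) (smul_zero _)
  obtain ⟨C, hC⟩ := hdvd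
  have hn := congrArg (Ideal.relNorm A) hC
  rw [Ideal.relNorm_algebraMap, map_mul, map_prod] at hn
  simp only [Ideal.relNorm_smul, Finset.prod_const, Finset.card_univ] at hn
  rw [← IsGaloisGroup.card_eq_finrank' G A B, Nat.card_eq_fintype_card, eq_comm,
    mul_eq_left₀ (pow_ne_zero _ (by simpa using hI))] at hn
  have hC1 : C = ⊤ := by
    have := Ideal.relNorm_le_comap A C
    rwa [hn, Ideal.one_eq_top, top_le_iff, Ideal.comap_eq_top_iff] at this
  rw [hC, hC1, ← Ideal.one_eq_top, mul_one]

/-- Ideals extended from the invariants are invariant. -/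
theorem Ideal.smul_map_algebraMap {A B G : Type*} [CommRing A] [CommRing B] [Algebra A B]
    [Group G] [MulSemiringAction G B] [SMulCommClass G A B] (g : G) (I : Ideal A) :
    g • I.map (algebraMap A B) = I.map (algebraMap A B) := by
  rw [Ideal.pointwise_smul_def, Ideal.map_map]
  congr 1
  ext a
  simp [smul_algebraMap]

end RelNorm

section Dihedral

variable {q : ℕ} {M G : Type*} [CommMonoid M] [Group G]

theorem DihedralGroup.prod_eq_prod_r_mul_prod_sr [NeZero q] (f : DihedralGroup q → M) :
    ∏ d, f d = (∏ z, f (r z)) * ∏ z, f (sr z) := by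
  have h : Function.Bijective (Sum.elim r sr : ZMod q ⊕ ZMod q → DihedralGroup q) := by
    refine ⟨?_, ?_⟩
    · rintro (a | a) (b | b) hab <;> simp_all
    · rintro (a | a)
      exacts [⟨.inl a, rfl⟩, ⟨.inr a, rfl⟩]
  rw [← h.prod_comp, Fintype.prod_sum_type]
  rfl

variable (e : G ≃* DihedralGroup q) (f : G → M)

theorem DihedralGroup.prod_comap_closure_sr (t : ZMod q)
    [Fintype ((Subgroup.closure {(sr t : DihedralGroup q)}).comap e.toMonoidHom)] :
    ∏ g : (Subgroup.closure {(sr t : DihedralGroup q)}).comap e.toMonoidHom, f g =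
      f 1 * f (e.symm (sr t)) := by
  classical
  rw [← Finset.prod_pair (f := f) (a := 1) (b := e.symm (sr t))
    (by rw [ne_comm, ne_eq, e.symm_apply_eq, map_one, one_def]; exact nofun), eq_comm]
  refine Finset.prod_subtype _ (fun x => ?_) f
  have hsr : sr t ^ 2 = 1 := by simp [pow_two]
  rw [Subgroup.mem_comap, Subgroup.mem_closure_singleton, Finset.mem_insert, Finset.mem_singleton,
    e.eq_symm_apply, ← map_eq_one_iff e e.injective]
  constructor
  · rintro (h | h)
    exacts [⟨0, by simpa using h.symm⟩, ⟨1, by simpa using h.symm⟩]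
  · rintro ⟨n, hn⟩
    change _ = e x at hn
    rw [← hn]
    obtain ⟨m, rfl | rfl⟩ := Int.even_or_odd' n
    · left
      rw [zpow_mul, zpow_ofNat, hsr, one_zpow]
    · right
      rw [zpow_add, zpow_mul, zpow_ofNat, hsr, one_zpow, one_mul, zpow_one]

theorem DihedralGroup.prod_comap_closure_r_one [NeZero q]
    [Fintype ((Subgroup.closure {(r 1 : DihedralGroup q)}).comap e.toMonoidHom)] :
    ∏ g : (Subgroup.closure {(r 1 : DihedralGroup q)}).comap e.toMonoidHom, f g =
      ∏ z, f (e.symm (r z)) := by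
  classical
  rw [← Finset.prod_image (s := Finset.univ) (g := fun z => e.symm (r z)) (f := f)
    (fun a _ b _ h => by simpa using h), eq_comm]
  refine Finset.prod_subtype _ (fun x => ?_) f
  rw [Subgroup.mem_comap, Subgroup.mem_closure_singleton]
  simp only [Finset.mem_image, Finset.mem_univ, true_and, e.symm_apply_eq, r_zpow, one_mul]
  exact (ZMod.intCast_surjective.exists (p := fun z => r z = e x))

end Dihedral

section NumberField

open Pointwise

variable {q : ℕ} {k L : Type*} [Field k] [Field L] [NumberField k] [NumberField L]
  [Algebra k L] [IsGalois k L] (e : (L ≃ₐ[k] L) ≃* DihedralGroup q) {t : ZMod q}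
  {K F : IntermediateField k L}

theorem map_relNorm_eq_prod_r_mul_prod_sr [NeZero q] (I : Ideal (𝓞 L)) :
    (Ideal.relNorm (𝓞 k) I).map (algebraMap (𝓞 k) (𝓞 L)) =
      (∏ z, e.symm (r z) • I) * ∏ z, e.symm (sr z) • I := by
  rw [Ideal.map_relNorm_eq_prod_smul (L ≃ₐ[k] L), ← e.symm.toEquiv.prod_comp,
    DihedralGroup.prod_eq_prod_r_mul_prod_sr]
  rfl

theorem isGaloisGroup_ringOfIntegers_of_eq_fixedField {H : Subgroup (L ≃ₐ[k] L)}
    (hK : K = fixedField H) : IsGaloisGroup H (𝓞 K) (𝓞 L) := by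
  have := IsGaloisGroup.of_fixedPoints_eq (L ≃ₐ[k] L) k L H K hK.symm
  exact IsGaloisGroup.of_isFractionRing H (𝓞 K) (𝓞 L) K L

theorem map_relNorm_of_fixedField_r [NeZero q]
    (hF : F = fixedField ((Subgroup.closure {(r 1 : DihedralGroup q)}).comap e.toMonoidHom))
    (I : Ideal (𝓞 L)) :
    (Ideal.relNorm (𝓞 F) I).map (algebraMap (𝓞 F) (𝓞 L)) = ∏ z, e.symm (r z) • I := by
  have := Fintype.ofFinite ((Subgroup.closure {(r 1 : DihedralGroup q)}).comap e.toMonoidHom)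
  have := isGaloisGroup_ringOfIntegers_of_eq_fixedField hF
  rw [Ideal.map_relNorm_eq_prod_smul
    ((Subgroup.closure {(r 1 : DihedralGroup q)}).comap e.toMonoidHom)]
  exact DihedralGroup.prod_comap_closure_r_one e (fun g => g • I)

theorem smul_map_of_fixedField_r
    (hF : F = fixedField ((Subgroup.closure {(r 1 : DihedralGroup q)}).comap e.toMonoidHom))
    (z : ZMod q) (I : Ideal (𝓞 F)) :
    e.symm (r z) • I.map (algebraMap (𝓞 F) (𝓞 L)) = I.map (algebraMap (𝓞 F) (𝓞 L)) := by
  have := isGaloisGroup_ringOfIntegers_of_eq_fixedField hF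
  refine Ideal.smul_map_algebraMap (⟨e.symm (r z), ?_⟩ :
    (Subgroup.closure {(r 1 : DihedralGroup q)}).comap e.toMonoidHom) I
  rw [Subgroup.mem_comap, Subgroup.mem_closure_singleton]
  obtain ⟨n, rfl⟩ := ZMod.intCast_surjective z
  exact ⟨n, by simp⟩

variable (hK : K = fixedField ((Subgroup.closure {(sr t : DihedralGroup q)}).comap e.toMonoidHom))
include hK

theorem map_relNorm_of_fixedField_sr (I : Ideal (𝓞 L)) :
    (Ideal.relNorm (𝓞 K) I).map (algebraMap (𝓞 K) (𝓞 L)) = I * e.symm (sr t) • I := by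
  have := Fintype.ofFinite ((Subgroup.closure {(sr t : DihedralGroup q)}).comap e.toMonoidHom)
  have := isGaloisGroup_ringOfIntegers_of_eq_fixedField hK
  rw [Ideal.map_relNorm_eq_prod_smul
    ((Subgroup.closure {(sr t : DihedralGroup q)}).comap e.toMonoidHom)]
  refine (DihedralGroup.prod_comap_closure_sr e (fun g => g • I) t).trans ?_
  rw [one_smul]

theorem smul_map_of_fixedField_sr (I : Ideal (𝓞 K)) :
    e.symm (sr t) • I.map (algebraMap (𝓞 K) (𝓞 L)) = I.map (algebraMap (𝓞 K) (𝓞 L)) := by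
  have := isGaloisGroup_ringOfIntegers_of_eq_fixedField hK
  exact Ideal.smul_map_algebraMap (⟨e.symm (sr t), by
    rw [Subgroup.mem_comap]
    exact Subgroup.subset_closure (by simp)⟩ :
    (Subgroup.closure {(sr t : DihedralGroup q)}).comap e.toMonoidHom) I

theorem relNorm_smul_of_fixedField_sr (I : Ideal (𝓞 L)) :
    Ideal.relNorm (𝓞 K) (e.symm (sr t) • I) = Ideal.relNorm (𝓞 K) I := by
  apply Ideal.map_injective_of_faithfullyFlat (B := 𝓞 L)
  rw [map_relNorm_of_fixedField_sr e hK, map_relNorm_of_fixedField_sr e hK, ← mul_smul, ← map_mul,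
    sr_mul_self, map_one, one_smul, mul_comm]

theorem relNorm_map_of_fixedField_sr (I : Ideal (𝓞 K)) :
    Ideal.relNorm (𝓞 K) (I.map (algebraMap (𝓞 K) (𝓞 L))) = I ^ 2 := by
  apply Ideal.map_injective_of_faithfullyFlat (B := 𝓞 L)
  rw [map_relNorm_of_fixedField_sr e hK, smul_map_of_fixedField_sr e hK, Ideal.map_pow, pow_two]

theorem relNorm_prod_rotations [NeZero q] (I : Ideal (𝓞 L)) :
    Ideal.relNorm (𝓞 K) (∏ z, e.symm (r z) • I) =
      (Ideal.relNorm (𝓞 k) I).map (algebraMap (𝓞 k) (𝓞 K)) := by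
  apply Ideal.map_injective_of_faithfullyFlat (B := 𝓞 L)
  rw [map_relNorm_of_fixedField_sr e hK, Ideal.map_map, ← IsScalarTower.algebraMap_eq,
    map_relNorm_eq_prod_r_mul_prod_sr e, Finset.smul_prod']
  congr 1
  simp_rw [← mul_smul, ← map_mul, sr_mul_r]
  exact Equiv.prod_comp (Equiv.addLeft t) (fun z => e.symm (sr z) • I)

theorem relNorm_smul_map_neg (I : Ideal (𝓞 K)) (z : ZMod q) :
    Ideal.relNorm (𝓞 K) (e.symm (r (-z)) • I.map (algebraMap (𝓞 K) (𝓞 L))) =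
      Ideal.relNorm (𝓞 K) (e.symm (r z) • I.map (algebraMap (𝓞 K) (𝓞 L))) := by
  rw [← relNorm_smul_of_fixedField_sr e hK (e.symm (r z) • _), ← mul_smul, ← map_mul, sr_mul_r,
    show sr (t + z) = r (-z) * sr t by simp [r_mul_sr], map_mul, mul_smul,
    smul_map_of_fixedField_sr e hK]

theorem mul_prod_relNorm_smul_map [NeZero q] (hq : Odd q) (I : Ideal (𝓞 K)) :
    I * ∏ m ∈ Finset.range (q / 2), Ideal.relNorm (𝓞 K)
      (e.symm (r ((m + 1 : ℕ) : ZMod q)) • I.map (algebraMap (𝓞 K) (𝓞 L))) =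
      (Ideal.relNorm (𝓞 k) I).map (algebraMap (𝓞 k) (𝓞 K)) := by
  apply pow_left_injective (two_ne_zero : (2 : ℕ) ≠ 0)
  dsimp only
  rw [← Ideal.map_pow, ← map_pow, ← relNorm_map_of_fixedField_sr e hK I,
    Ideal.relNorm_relNorm (𝓞 k) (𝓞 K), ← relNorm_prod_rotations e hK, map_prod,
    ← prod_range_succ_cast_eq_prod_zmod (fun z => Ideal.relNorm (𝓞 K) (e.symm (r z) • _)),
    prod_range_of_even hq (fun z => Ideal.relNorm (𝓞 K)
      (e.symm (r z) • I.map (algebraMap (𝓞 K) (𝓞 L)))) (relNorm_smul_map_neg e hK I),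
    r_zero, map_one, one_smul, relNorm_map_of_fixedField_sr e hK, mul_pow]

end NumberField

namespace ClassGroup

section MapIdeal

variable {R S : Type*} [CommRing R] [CommRing S] [IsDedekindDomain R] [IsDedekindDomain S]

/-- The restriction to nonzero ideals of a multiplicative map between ideals that sends nonzero
principal ideals to nonzero principal ideals. -/
def mapNonzeroIdeal (f : Ideal R →*₀ Ideal S)
    (hf : ∀ x ≠ 0, ∃ y ≠ 0, f (Ideal.span {x}) = Ideal.span {y}) : (Ideal R)⁰ →* (Ideal S)⁰ :=
  ((f : Ideal R →* Ideal S).comp (Ideal R)⁰.subtype).codRestrict _ (by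
    rintro ⟨I, hI⟩
    rw [mem_nonZeroDivisors_iff_ne_zero] at hI ⊢
    obtain ⟨x, hxI, hx⟩ := Submodule.exists_mem_ne_zero_of_ne_bot hI
    obtain ⟨y, hy, hxy⟩ := hf x hx
    refine ne_zero_of_dvd_ne_zero (q := f (Ideal.span {x})) ?_
      (map_dvd f (Ideal.dvd_span_singleton.2 hxI))
    rwa [hxy, ne_eq, Ideal.zero_eq_bot, Ideal.span_singleton_eq_bot])

variable (f : Ideal R →*₀ Ideal S) (hf : ∀ x ≠ 0, ∃ y ≠ 0, f (Ideal.span {x}) = Ideal.span {y})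

@[simp]
theorem coe_mapNonzeroIdeal (I : (Ideal R)⁰) : (mapNonzeroIdeal f hf I : Ideal S) = f I :=
  rfl

theorem mk0_mapNonzeroIdeal_eq {I J : (Ideal R)⁰} (h : mk0 I = mk0 J) :
    mk0 (mapNonzeroIdeal f hf I) = mk0 (mapNonzeroIdeal f hf J) := by
  obtain ⟨x, y, hx, hy, h⟩ := mk0_eq_mk0_iff.1 h
  obtain ⟨x', hx', hxx'⟩ := hf x hx
  obtain ⟨y', hy', hyy'⟩ := hf y hy
  refine mk0_eq_mk0_iff.2 ⟨x', y', hx', hy', ?_⟩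
  simpa [hxx', hyy'] using congrArg f h

/-- The homomorphism of class groups induced by a multiplicative map between ideals that sends
nonzero principal ideals to nonzero principal ideals. -/
noncomputable def mapIdeal : ClassGroup R →* ClassGroup S :=
  MonoidHom.mk' (fun c => mk0 (mapNonzeroIdeal f hf (Function.surjInv mk0_surjective c)))
    fun a b => by
      rw [← map_mul, ← map_mul]
      apply mk0_mapNonzeroIdeal_eq
      simp [Function.surjInv_eq mk0_surjective]

@[simp]
theorem mapIdeal_mk0 (I : (Ideal R)⁰) :
    mapIdeal f hf (mk0 I) = mk0 (mapNonzeroIdeal f hf I) :=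
  mk0_mapNonzeroIdeal_eq f hf (Function.surjInv_eq mk0_surjective _)

end MapIdeal

section RelNorm

variable (R : Type*) {S : Type*} [CommRing R] [CommRing S] [IsDedekindDomain R]
  [IsDedekindDomain S] [Algebra R S] [Module.Finite R S] [Module.IsTorsionFree R S]

/-- The relative norm on ideal classes. -/
noncomputable def relNorm : ClassGroup S →* ClassGroup R :=
  mapIdeal (Ideal.relNorm R) fun x hx =>
    ⟨_, Algebra.intNorm_ne_zero.2 hx, Ideal.relNorm_singleton R x⟩

theorem relNorm_mem_nonZeroDivisors (I : (Ideal S)⁰) :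
    Ideal.relNorm R (I : Ideal S) ∈ (Ideal R)⁰ := by
  rw [mem_nonZeroDivisors_iff_ne_zero, Ideal.zero_eq_bot, ne_eq, Ideal.relNorm_eq_bot_iff (R := R)]
  exact nonZeroDivisors.coe_ne_zero I

theorem relNorm_mk0 (I : (Ideal S)⁰) :
    relNorm R (mk0 I) = mk0 ⟨Ideal.relNorm R (I : Ideal S), relNorm_mem_nonZeroDivisors R I⟩ :=
  mapIdeal_mk0 _ _ I

end RelNorm

section Smul

open Pointwise

variable {G R : Type*} [Group G] [CommRing R] [IsDedekindDomain R] [MulSemiringAction G R]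

/-- The action of a ring automorphism on ideal classes. -/
noncomputable def smulHom (g : G) : ClassGroup R →* ClassGroup R :=
  mapIdeal (MulSemiringAction.toRingHom G (Ideal R) g).toMonoidWithZeroHom fun x hx =>
    ⟨g • x, by rwa [ne_eq, smul_eq_zero_iff_eq], by
      change g • Ideal.span {x} = _
      rw [Ideal.pointwise_smul_def, Ideal.map_span, Set.image_singleton]
      rfl⟩

theorem smulHom_mk0 (g : G) (I : (Ideal R)⁰) : smulHom g (mk0 I) =
    mk0 ⟨g • (I : Ideal R), mem_nonZeroDivisors_iff_ne_zero.2
      ((smul_eq_zero_iff_eq g).not.2 (nonZeroDivisors.coe_ne_zero I))⟩ :=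
  mapIdeal_mk0 _ _ I

theorem smulHom_mul (g h : G) (x : ClassGroup R) :
    smulHom (g * h) x = smulHom g (smulHom h x) := by
  obtain ⟨I, rfl⟩ := mk0_surjective x
  simp only [smulHom_mk0]
  congr 1
  ext1
  simp [mul_smul]

theorem smulHom_one (x : ClassGroup R) : smulHom (1 : G) x = x := by
  obtain ⟨I, rfl⟩ := mk0_surjective x
  simp only [smulHom_mk0]
  congr 1
  ext1
  simp

end Smul

theorem eq_extendedHom {A B : Type*} [CommRing A] [CommRing B] [IsDedekindDomain A]
    [IsDedekindDomain B] [Algebra A B] [Module.IsTorsionFree A B]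
    (f : ClassGroup A →* ClassGroup B)
    (hf : ∀ (I : (Ideal A)⁰) (J : (Ideal B)⁰),
      (J : Ideal B) = Ideal.map (algebraMap A B) (I : Ideal A) → f (mk0 I) = mk0 J) :
    f = extendedHom A B := by
  ext x
  obtain ⟨I, rfl⟩ := mk0_surjective x
  rw [extendedHom_mk0, hf I (extendedIdeal A B I) rfl]

end ClassGroup

section ClassGroupTransfer

open Pointwise ClassGroup

variable {q : ℕ} {k L : Type*} [Field k] [Field L] [NumberField k] [NumberField L]
  [Algebra k L] [IsGalois k L] (e : (L ≃ₐ[k] L) ≃* DihedralGroup q) {t : ZMod q}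
  {K F : IntermediateField k L}

theorem reflectionTransfer_of_fixedField_sr [NeZero q] (hq : Odd q)
    (hK : K = fixedField ((Subgroup.closure {(sr t : DihedralGroup q)}).comap e.toMonoidHom)) :
    ReflectionTransfer (fun d => smulHom (R := 𝓞 L) (e.symm d)) t (extendedHom (𝓞 K) (𝓞 L))
      (ClassGroup.relNorm (𝓞 K)) (extendedHom (𝓞 k) (𝓞 K)).range where
  smul_incl b := by
    obtain ⟨I, rfl⟩ := mk0_surjective b
    simp only [smulHom_mk0, extendedHom_mk0]
    congr 1
    ext1
    simpa using smul_map_of_fixedField_sr e hK I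
  norm_smul x := by
    obtain ⟨I, rfl⟩ := mk0_surjective x
    simp only [smulHom_mk0, relNorm_mk0]
    congr 1
    ext1
    simpa using relNorm_smul_of_fixedField_sr e hK I
  incl_norm x := by
    obtain ⟨I, rfl⟩ := mk0_surjective x
    simp only [smulHom_mk0, relNorm_mk0, extendedHom_mk0, ← map_mul]
    congr 1
    ext1
    simpa using map_relNorm_of_fixedField_sr e hK I
  norm_incl b := by
    obtain ⟨I, rfl⟩ := mk0_surjective b
    simp only [relNorm_mk0, extendedHom_mk0, ← map_pow]
    congr 1
    ext1
    simpa using relNorm_map_of_fixedField_sr e hK I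
  norm_rotations_mem x := by
    obtain ⟨I, rfl⟩ := mk0_surjective x
    refine ⟨ClassGroup.relNorm (𝓞 k) (mk0 I), ?_⟩
    simp only [smulHom_mk0, relNorm_mk0, extendedHom_mk0, ← map_prod]
    congr 1
    ext1
    simpa using (relNorm_prod_rotations e hK I).symm
  half_norm_mem b := by
    obtain ⟨I, rfl⟩ := mk0_surjective b
    refine ⟨ClassGroup.relNorm (𝓞 k) (mk0 I), ?_⟩
    simp only [smulHom_mk0, relNorm_mk0, extendedHom_mk0, ← map_prod, ← map_mul]
    congr 1
    ext1
    simpa using (mul_prod_relNorm_smul_map e hK hq I).symm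

theorem smulHom_extendedHom_of_fixedField_r
    (hF : F = fixedField ((Subgroup.closure {(r 1 : DihedralGroup q)}).comap e.toMonoidHom))
    (z : ZMod q) (x : ClassGroup (𝓞 F)) :
    smulHom (e.symm (r z)) (extendedHom (𝓞 F) (𝓞 L) x) = extendedHom (𝓞 F) (𝓞 L) x := by
  obtain ⟨I, rfl⟩ := mk0_surjective x
  simp only [smulHom_mk0, extendedHom_mk0]
  congr 1
  ext1
  simpa using smul_map_of_fixedField_r e hF z I

theorem prod_smulHom_rotations_mem [NeZero q]
    (hF : F = fixedField ((Subgroup.closure {(r 1 : DihedralGroup q)}).comap e.toMonoidHom))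
    (x : ClassGroup (𝓞 L)) :
    ∏ z, smulHom (e.symm (r z)) x ∈ (extendedHom (𝓞 F) (𝓞 L)).range := by
  obtain ⟨I, rfl⟩ := mk0_surjective x
  refine ⟨ClassGroup.relNorm (𝓞 F) (mk0 I), ?_⟩
  simp only [smulHom_mk0, relNorm_mk0, extendedHom_mk0, ← map_prod]
  congr 1
  ext1
  simpa using map_relNorm_of_fixedField_r e hF I

end ClassGroupTransfer

/-- Let `L/k` be dihedral of degree `2q` (`q` odd), `F` the quadratic
subextension, `K, K'` the fixed fields of two distinct order-2 subgroups.  Then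
`(Cl(L)/i_{L/F}Cl(F))₂ ≅ (Cl(K)/i_{K/k}Cl(k))₂ ⊕ (Cl(K')/i_{K'/k}Cl(k))₂`,
where `(·)₂` is the 2-primary component and the maps `i` (extension of ideals on class
groups) are characterised via `ClassGroup.mk0`. -/
theorem two_primary_classgroup_split (q : ℕ) [NeZero q] (hq : Odd q)
    (k L : Type*) [Field k] [Field L] [NumberField k] [NumberField L]
    [Algebra k L] [IsGalois k L]
    (e : (L ≃ₐ[k] L) ≃* DihedralGroup q)
    (F K K' : IntermediateField k L)
    (hF : F = fixedField ((Subgroup.closure {(r 1 : DihedralGroup q)}).comap e.toMonoidHom))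
    (hK : K = fixedField ((Subgroup.closure {(sr 0 : DihedralGroup q)}).comap e.toMonoidHom))
    (hK' : K' = fixedField
      ((Subgroup.closure {(sr 0 * r 1 : DihedralGroup q)}).comap e.toMonoidHom))
    (ιF : ClassGroup (𝓞 ↥F) →* ClassGroup (𝓞 L))
    (hιF : ∀ (I : (Ideal (𝓞 ↥F))⁰) (J : (Ideal (𝓞 L))⁰),
      (J : Ideal (𝓞 L)) = Ideal.map (algebraMap (𝓞 ↥F) (𝓞 L)) (I : Ideal (𝓞 ↥F)) →
        ιF (ClassGroup.mk0 I) = ClassGroup.mk0 J)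
    (ιK : ClassGroup (𝓞 k) →* ClassGroup (𝓞 ↥K))
    (hιK : ∀ (I : (Ideal (𝓞 k))⁰) (J : (Ideal (𝓞 ↥K))⁰),
      (J : Ideal (𝓞 ↥K)) = Ideal.map (algebraMap (𝓞 k) (𝓞 ↥K)) (I : Ideal (𝓞 k)) →
        ιK (ClassGroup.mk0 I) = ClassGroup.mk0 J)
    (ιK' : ClassGroup (𝓞 k) →* ClassGroup (𝓞 ↥K'))
    (hιK' : ∀ (I : (Ideal (𝓞 k))⁰) (J : (Ideal (𝓞 ↥K'))⁰),
      (J : Ideal (𝓞 ↥K')) = Ideal.map (algebraMap (𝓞 k) (𝓞 ↥K')) (I : Ideal (𝓞 k)) →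
        ιK' (ClassGroup.mk0 I) = ClassGroup.mk0 J) :
    Nonempty
      (↥(mprimary2 (ClassGroup (𝓞 L) ⧸ ιF.range)) ≃*
        ↥(mprimary2 (ClassGroup (𝓞 ↥K) ⧸ ιK.range)) ×
          ↥(mprimary2 (ClassGroup (𝓞 ↥K') ⧸ ιK'.range))) := by
  obtain rfl := ClassGroup.eq_extendedHom ιF hιF
  obtain rfl := ClassGroup.eq_extendedHom ιK hιK
  obtain rfl := ClassGroup.eq_extendedHom ιK' hιK'
  rw [sr_mul_r, zero_add] at hK'
  refine (reflectionTransfer_of_fixedField_sr e hq hK).nonempty_mprimary2_equiv hq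
    (fun a b x => by rw [map_mul, ClassGroup.smulHom_mul])
    (fun x => by rw [map_one, ClassGroup.smulHom_one])
    (reflectionTransfer_of_fixedField_sr e hq hK') _ ?_ ?_ ?_ ?_
  · exact prod_smulHom_rotations_mem e hF
  · rintro _ ⟨y, rfl⟩ z
    exact smulHom_extendedHom_of_fixedField_r e hF z y
  · rintro _ ⟨y, rfl⟩
    exact ⟨ClassGroup.extendedHom (𝓞 k) (𝓞 F) y, by simp only [ClassGroup.extendedHom_comp_apply]⟩
  · rintro _ ⟨y, rfl⟩
    exact ⟨ClassGroup.extendedHom (𝓞 k) (𝓞 F) y, by simp only [ClassGroup.extendedHom_comp_apply]⟩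
end

section
/- Let D be the dihedral group of order 2q with q odd, with cyclic subgroup G of order q and order-2 subgroups Σ, Σ'. Let B be a D-module that is finitely generated as a Z-module. Then the index (B : B^Σ + B^Σ' + B^G) is finite and |Ĥ⁰(D, B⊗Z[1/2])| / |Ĥ^{-1}(D, B⊗Z[1/2])| = (B : B^Σ + B^Σ' + B^G) · Q(G, B) · |I_G B ∩ B^D| / |I_G B ∩ B^G| · q^{rank_Z(B^D) − rank_Z(B^G)}, where Q(G, B) = |Ĥ⁰(G,B)|/|H¹(G,B)| is the Herbrand quotient. -/
open DihedralGroup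

section Prelude

variable (q : ℕ) [NeZero q] (B : Type*) [AddCommGroup B]
  [DistribMulAction (DihedralGroup q) B]

/-- The subgroup of points fixed by a subgroup `H` of the dihedral group. -/
def fixedBy (H : Subgroup (DihedralGroup q)) : AddSubgroup B where
  carrier := {b | ∀ h ∈ H, h • b = b}
  zero_mem' := fun h _ => smul_zero h
  add_mem' := by intro a b ha hb h hh; rw [smul_add, ha h hh, hb h hh]
  neg_mem' := by intro a ha h hh; rw [smul_neg, ha h hh]

/-- The norm map of the rotation subgroup `G = ⟨ρ⟩`. -/
def normG : B →+ B where
  toFun b := ∑ i : ZMod q, (r i : DihedralGroup q) • b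
  map_zero' := by simp
  map_add' x y := by simp [smul_add, Finset.sum_add_distrib]

/-- `I_G·B = (1-ρ)B`. -/
def augG : AddSubgroup B :=
  AddMonoidHom.range
    { toFun := fun b => b - (r 1 : DihedralGroup q) • b
      map_zero' := by simp
      map_add' := by intro x y; simp only [smul_add]; abel }

/-- Tate cohomology `Ĥ⁰(G, B)`. -/
abbrev H0G : Type _ :=
  fixedBy q B (Subgroup.closure {(r 1 : DihedralGroup q)}) ⧸
    ((normG q B).range.addSubgroupOf (fixedBy q B (Subgroup.closure {r 1})))

/-- Inhomogeneous 1-cocycles of `G = ⟨ρ⟩ ≅ ℤ/q` with values in `B`. -/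
def Z1G : AddSubgroup (ZMod q → B) where
  carrier := {f | ∀ i j : ZMod q, f (i + j) = f i + (r i : DihedralGroup q) • f j}
  zero_mem' := by intro i j; simp
  add_mem' := by
    intro a b ha hb i j
    simp only [Pi.add_apply, ha i j, hb i j, smul_add]; abel
  neg_mem' := by
    intro a ha i j
    simp only [Pi.neg_apply, ha i j, smul_neg]; abel

/-- 1-coboundaries of `G` with values in `B`. -/
def B1G : AddSubgroup (ZMod q → B) :=
  AddMonoidHom.range
    { toFun := fun b => fun i : ZMod q => (r i : DihedralGroup q) • b - b
      map_zero' := by funext i; simp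
      map_add' := by intro x y; funext i; simp only [smul_add, Pi.add_apply]; abel }

/-- Group cohomology `H¹(G, B)` via inhomogeneous cocycles. -/
abbrev H1G : Type _ := Z1G q B ⧸ ((B1G q B).addSubgroupOf (Z1G q B))

/-- `B ⊗ ℤ[1/2]`, i.e. the localization of `B` away from 2. -/
abbrev Bhalf : Type _ := LocalizedModule (Submonoid.powers (2 : ℤ)) B

/-- The action of `g ∈ D` on `B ⊗ ℤ[1/2]`. -/
noncomputable def lact (g : DihedralGroup q) : Bhalf B →ₗ[ℤ] Bhalf B :=
  LocalizedModule.map (Submonoid.powers (2 : ℤ))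
    (DistribMulAction.toAddMonoidHom B g).toIntLinearMap

/-- The fixed points of `D` on `B ⊗ ℤ[1/2]`. -/
noncomputable def fixedD2 : AddSubgroup (Bhalf B) where
  carrier := {x | ∀ g : DihedralGroup q, lact q B g x = x}
  zero_mem' := fun g => map_zero _
  add_mem' := by intro a b ha hb g; rw [map_add, ha g, hb g]
  neg_mem' := by intro a ha g; rw [map_neg, ha g]

/-- The norm map of `D` on `B ⊗ ℤ[1/2]`. -/
noncomputable def normD2 : Bhalf B →+ Bhalf B where
  toFun x := ∑ g : DihedralGroup q, lact q B g x
  map_zero' := by simp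
  map_add' x y := by simp [map_add, Finset.sum_add_distrib]

/-- The augmentation submodule `I_D·(B ⊗ ℤ[1/2])`. -/
noncomputable def augD2 : AddSubgroup (Bhalf B) :=
  AddSubgroup.closure {x | ∃ (g : DihedralGroup q) (y : Bhalf B), x = y - lact q B g y}

/-- Tate cohomology `Ĥ⁰(D, B ⊗ ℤ[1/2])`. -/
abbrev H0Dhalf : Type _ :=
  fixedD2 q B ⧸ ((normD2 q B).range.addSubgroupOf (fixedD2 q B))

/-- Tate cohomology `Ĥ⁻¹(D, B ⊗ ℤ[1/2])`. -/
abbrev Hneg1Dhalf : Type _ :=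
  (normD2 q B).ker ⧸ ((augD2 q B).addSubgroupOf (normD2 q B).ker)

end Prelude

section AbelianGroups

variable {B : Type*} [AddCommGroup B]

theorem AddSubgroup.mem_of_coprime_nsmul_mem {m n : ℕ} (h : m.Coprime n) {L : AddSubgroup B} {x : B}
    (hm : m • x ∈ L) (hn : n • x ∈ L) : x ∈ L := by
  obtain ⟨a, b, hab⟩ := Nat.isCoprime_iff_coprime.mpr h
  have : x = a • (m • x) + b • (n • x) := by
    rw [← natCast_zsmul, ← natCast_zsmul, smul_smul, smul_smul, ← add_smul, hab, one_smul]
  rw [this]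
  exact L.add_mem (L.zsmul_mem hm a) (L.zsmul_mem hn b)

/-- A finitely generated abelian group has finite index over any subgroup containing a nonzero
multiple of it. -/
theorem AddSubgroup.relIndex_ne_zero_of_nsmul_mem [Module.Finite ℤ B] {L H : AddSubgroup B} {q : ℕ}
    (hq : q ≠ 0) (h : ∀ x ∈ H, q • x ∈ L) : L.relIndex H ≠ 0 := by
  have : Module.Finite ℤ (H ⧸ L.addSubgroupOf H) := by
    have : Module.Finite ℤ H := inferInstanceAs (Module.Finite ℤ (AddSubgroup.toIntSubmodule H))
    exact Module.Finite.of_surjective (QuotientAddGroup.mk' (L.addSubgroupOf H)).toIntLinearMap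
      (QuotientAddGroup.mk'_surjective _)
  have : Finite (H ⧸ L.addSubgroupOf H) := by
    refine Module.finite_of_fg_torsion _ fun x => ?_
    obtain ⟨x, rfl⟩ := QuotientAddGroup.mk_surjective x
    refine ⟨⟨(q : ℤ), mem_nonZeroDivisors_of_ne_zero (by exact_mod_cast hq)⟩, ?_⟩
    change (q : ℤ) • (x : H ⧸ L.addSubgroupOf H) = 0
    rw [natCast_zsmul, ← QuotientAddGroup.mk_nsmul, QuotientAddGroup.eq_zero_iff]
    exact h x x.2
  exact AddSubgroup.index_ne_zero_of_finite

/-- The Euler characteristic of multiplication by `q` on a finitely generated abelian group. -/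
theorem index_range_nsmul_eq_card_ker_mul_pow (M : Type*) [AddCommGroup M] [Module.Finite ℤ M]
    {q : ℕ} (hq : q ≠ 0) :
    (nsmulAddMonoidHom (α := M) q).range.index =
      Nat.card (nsmulAddMonoidHom (α := M) q).ker * q ^ Module.finrank ℤ M := by
  let T := Submodule.torsion ℤ M
  let T' := T.toAddSubgroup
  let m := nsmulAddMonoidHom (α := M) q
  let m' := nsmulAddMonoidHom (α := M ⧸ T) q
  let π : M →+ M ⧸ T := T.mkQ.toAddMonoidHom
  have hT {x : M} (hx : q • x ∈ T) : x ∈ T := by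
    obtain ⟨a, ha⟩ := (Submodule.mem_torsion_iff _).1 hx
    refine (Submodule.mem_torsion_iff _).2
      ⟨a * ⟨(q : ℤ), mem_nonZeroDivisors_of_ne_zero (by exact_mod_cast hq)⟩, ?_⟩
    rw [mul_smul, ← ha]
    congr 1
    exact natCast_zsmul x q
  have hTtors : Module.IsTorsion ℤ T := Submodule.torsion_isTorsion
  have : Finite T' := Module.finite_of_fg_torsion T hTtors
  have hπ : π.ker = T' := by
    ext x
    exact Submodule.Quotient.mk_eq_zero T
  have hker : m.ker ≤ T' := fun x hx => hT (by
    rw [show q • x = 0 from hx]; exact T.zero_mem)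
  have hrank : Module.finrank ℤ (M ⧸ T) = Module.finrank ℤ M := by
    rw [← Submodule.finrank_quotient_add_finrank T,
      Module.finrank_eq_zero_iff_isTorsion.2 hTtors, add_zero]
  have hfree : (m.range ⊔ T').index = q ^ Module.finrank ℤ M := by
    have h1 : m.range.map π = m'.range := by
      ext y
      constructor
      · rintro ⟨_, ⟨x, rfl⟩, rfl⟩
        exact ⟨π x, (map_nsmul π q x).symm⟩
      · rintro ⟨y, rfl⟩
        obtain ⟨x, rfl⟩ := T.mkQ_surjective y
        exact ⟨_, ⟨x, rfl⟩, map_nsmul π q x⟩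
    have h2 := AddSubgroup.index_map m.range π
    have h3 : π.range = ⊤ := AddMonoidHom.range_eq_top.2 T.mkQ_surjective
    rw [h1, hπ, h3, AddSubgroup.index_top, mul_one] at h2
    rw [← h2, ← hrank]
    exact AddSubgroup.index_range_nsmul _ q
  have hmap : m.range ⊓ T' = T'.map m := by
    ext y
    constructor
    · rintro ⟨⟨x, rfl⟩, hx⟩
      exact ⟨x, hT hx, rfl⟩
    · rintro ⟨x, hx, rfl⟩
      exact ⟨⟨x, rfl⟩, T'.nsmul_mem hx q⟩
  have htors : m.range.relIndex T' = Nat.card m.ker := by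
    have h1 : Nat.card (T'.map m) * (T'.map m).relIndex T' = Nat.card T' := by
      rw [← AddSubgroup.relIndex_bot_left, ← AddSubgroup.relIndex_bot_left]
      exact AddSubgroup.relIndex_mul_relIndex _ _ _ bot_le (hmap ▸ inf_le_right)
    have h2 : Nat.card m.ker * Nat.card (T'.map m) = Nat.card T' := by
      have h : Nat.card (T'.map m) = m.ker.relIndex T' := by
        rw [← AddSubgroup.relIndex_bot_left, ← AddSubgroup.map_bot m,
          AddSubgroup.relIndex_map_map, bot_sup_eq, sup_eq_left.2 hker]
      rw [h, ← AddSubgroup.relIndex_bot_left, ← AddSubgroup.relIndex_bot_left]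
      exact AddSubgroup.relIndex_mul_relIndex _ _ _ bot_le hker
    have h3 : 0 < Nat.card (T'.map m) := by
      have : Finite (T'.map m) := Set.Finite.image m (Set.toFinite (T' : Set M))
      exact Nat.card_pos
    rw [← AddSubgroup.inf_relIndex_right, hmap]
    exact Nat.eq_of_mul_eq_mul_left h3 (by rw [h1, ← h2, mul_comm])
  rw [← AddSubgroup.relIndex_mul_index (le_sup_left : m.range ≤ m.range ⊔ T'), hfree,
    sup_comm, AddSubgroup.relIndex_sup_right, htors]

/-- Comparing, for an endomorphism `n` of `V` with image in `M`, the index of `I ⊔ M` in `V` with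
the indices measuring the kernel and the image of `n`. -/
theorem relIndex_sup_mul_relIndex_map_mul_card (n : B →+ B) {V I M : AddSubgroup B}
    (hI : I ≤ V ⊓ n.ker) (hM : M ≤ V) (hn : V.map n ≤ M) :
    (I ⊔ M).relIndex V * (V.map n).relIndex M * Nat.card ↥(M ⊓ n.ker) =
      (M.map n).relIndex M * Nat.card ↥(I ⊓ M) * I.relIndex (V ⊓ n.ker) := by
  have h1 : (M.map n).relIndex (V.map n) * (V.map n).relIndex M = (M.map n).relIndex M :=
    AddSubgroup.relIndex_mul_relIndex _ _ _ (AddSubgroup.map_mono hM) hn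
  have h2 : (M.map n).relIndex (V.map n) = (M ⊔ (V ⊓ n.ker)).relIndex V := by
    have : V ⊔ n.ker = V ⊔ (M ⊔ n.ker) := by rw [← sup_assoc, sup_eq_left.2 hM]
    rw [AddSubgroup.relIndex_map_map, this, AddSubgroup.relIndex_sup_right,
      ← AddSubgroup.inf_relIndex_right, sup_inf_assoc_of_le _ hM, inf_comm n.ker]
  have h3 : (M ⊔ I).relIndex (M ⊔ (V ⊓ n.ker)) * (M ⊔ (V ⊓ n.ker)).relIndex V =
      (M ⊔ I).relIndex V :=
    AddSubgroup.relIndex_mul_relIndex _ _ _ (sup_le_sup_left hI _) (sup_le hM inf_le_left)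
  have h4 : (M ⊔ I).relIndex (M ⊔ (V ⊓ n.ker)) = (I ⊔ (M ⊓ n.ker)).relIndex (V ⊓ n.ker) := by
    have : M ⊔ (V ⊓ n.ker) = (V ⊓ n.ker) ⊔ (M ⊔ I) := by
      rw [sup_left_comm, sup_eq_left.2 hI]
    rw [this, AddSubgroup.relIndex_sup_right, ← AddSubgroup.inf_relIndex_right, sup_comm M I,
      sup_inf_assoc_of_le _ hI, ← inf_assoc, inf_eq_left.2 hM]
  have h5 : I.relIndex (I ⊔ (M ⊓ n.ker)) * (I ⊔ (M ⊓ n.ker)).relIndex (V ⊓ n.ker) =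
      I.relIndex (V ⊓ n.ker) :=
    AddSubgroup.relIndex_mul_relIndex _ _ _ le_sup_left (sup_le hI (inf_le_inf_right _ hM))
  have h6 : Nat.card ↥(I ⊓ M) * I.relIndex (I ⊔ (M ⊓ n.ker)) = Nat.card ↥(M ⊓ n.ker) := by
    have : I ⊓ (M ⊓ n.ker) = I ⊓ M := by
      rw [← inf_assoc, inf_eq_left]
      exact inf_le_left.trans (hI.trans inf_le_right)
    rw [sup_comm, AddSubgroup.relIndex_sup_right, ← AddSubgroup.inf_relIndex_right, this,
      ← AddSubgroup.relIndex_bot_left, ← AddSubgroup.relIndex_bot_left]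
    exact AddSubgroup.relIndex_mul_relIndex _ _ _ bot_le (this ▸ inf_le_right)
  rw [sup_comm I M, ← h3, h4, ← h1, h2, ← h5, ← h6]
  ring

section Involution

variable (s : B →+ B)

/-- The subgroup on which an endomorphism acts as the identity. -/
def plusPart : AddSubgroup B := s.eqLocus (AddMonoidHom.id B)

/-- The subgroup on which an endomorphism acts as negation. -/
def minusPart : AddSubgroup B := s.eqLocus (-AddMonoidHom.id B)

variable {s}

theorem mem_plusPart {x : B} : x ∈ plusPart s ↔ s x = x := Iff.rfl

theorem mem_minusPart {x : B} : x ∈ minusPart s ↔ s x = -x := Iff.rfl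

theorem add_mem_plusPart (hs : ∀ x, s (s x) = x) (x : B) : x + s x ∈ plusPart s := by
  rw [mem_plusPart, map_add, hs, add_comm]

theorem sub_mem_minusPart (hs : ∀ x, s (s x) = x) (x : B) : x - s x ∈ minusPart s := by
  rw [mem_minusPart, map_sub, hs, neg_sub]

/-- Over a stable pair of subgroups whose quotient is killed by an odd number, the index is the
product of the indices on the two eigenspaces of an involution. -/
theorem relIndex_eq_mul_of_involution (hs : ∀ x, s (s x) = x) {L H : AddSubgroup B} {q : ℕ}
    (hq : Odd q) (hLH : L ≤ H) (hL : ∀ x ∈ L, s x ∈ L) (hH : ∀ x ∈ H, s x ∈ H)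
    (hqH : ∀ x ∈ H, q • x ∈ L) :
    L.relIndex H = L.relIndex (H ⊓ plusPart s) * L.relIndex (H ⊓ minusPart s) := by
  have hco : q.Coprime 2 := hq.coprime_two_right
  let P := H ⊓ plusPart s
  let N := H ⊓ minusPart s
  have hLP : P ⊔ L ≤ H := sup_le inf_le_left hLH
  have hsup : N ⊔ (P ⊔ L) = H := by
    refine le_antisymm (sup_le inf_le_left hLP) fun x hx => ?_
    refine AddSubgroup.mem_of_coprime_nsmul_mem hco
      (AddSubgroup.mem_sup_right (AddSubgroup.mem_sup_right (hqH x hx))) ?_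
    have : 2 • x = (x - s x) + (x + s x) := by rw [two_nsmul]; abel
    rw [this]
    refine add_mem (AddSubgroup.mem_sup_left ⟨H.sub_mem hx (hH x hx), sub_mem_minusPart hs x⟩)
      (AddSubgroup.mem_sup_right (AddSubgroup.mem_sup_left
        ⟨H.add_mem hx (hH x hx), add_mem_plusPart hs x⟩))
  have hinf : (P ⊔ L) ⊓ N = L ⊓ N := by
    refine le_antisymm ?_ (inf_le_inf_right _ le_sup_right)
    rintro x ⟨hx, hxN⟩
    refine ⟨AddSubgroup.mem_of_coprime_nsmul_mem hco (hqH x hxN.1) ?_, hxN⟩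
    obtain ⟨p, hp, l, hl, rfl⟩ := AddSubgroup.mem_sup.1 hx
    have h1 : s (p + l) = -(p + l) := hxN.2
    have h2 : s p = p := hp.2
    have : 2 • (p + l) = l - s l := by
      rw [map_add, h2] at h1
      rw [eq_sub_of_add_eq' h1, two_nsmul]
      abel
    rw [this]
    exact sub_mem hl (hL l hl)
  calc L.relIndex H = L.relIndex (P ⊔ L) * (P ⊔ L).relIndex H :=
        (AddSubgroup.relIndex_mul_relIndex _ _ _ le_sup_right hLP).symm
    _ = L.relIndex P * L.relIndex N := by
        rw [AddSubgroup.relIndex_sup_right]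
        congr 1
        nth_rw 1 [← hsup]
        rw [AddSubgroup.relIndex_sup_right, ← AddSubgroup.inf_relIndex_right, hinf,
          AddSubgroup.inf_relIndex_right]

/-- On a subgroup stable under an involution, the rank is the sum of the ranks of the two
eigenspaces. -/
theorem finrank_eq_add_of_involution [Module.Finite ℤ B] (hs : ∀ x, s (s x) = x)
    {H : AddSubgroup B} (hH : ∀ x ∈ H, s x ∈ H) :
    Module.finrank ℤ H =
      Module.finrank ℤ ↥(H ⊓ plusPart s) + Module.finrank ℤ ↥(H ⊓ minusPart s) := by
  have hfin (K : AddSubgroup B) : Module.Finite ℤ K :=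
    inferInstanceAs (Module.Finite ℤ (AddSubgroup.toIntSubmodule K))
  let f : H →ₗ[ℤ] ↥(H ⊓ minusPart s) := AddMonoidHom.toIntLinearMap
    { toFun := fun x => ⟨x - s x, H.sub_mem x.2 (hH x x.2), sub_mem_minusPart hs x⟩
      map_zero' := by ext; simp
      map_add' := by
        intro x y
        ext
        simp only [AddSubgroup.coe_add, map_add]
        abel }
  have hker : Module.finrank ℤ f.ker = Module.finrank ℤ ↥(H ⊓ plusPart s) := by
    refine LinearEquiv.finrank_eq (AddEquiv.toIntLinearEquiv
      { toFun := fun x => ⟨x.1, x.1.2, (sub_eq_zero.1 (congrArg Subtype.val x.2)).symm⟩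
        invFun := fun x => ⟨⟨x.1, x.2.1⟩, Subtype.ext (sub_eq_zero.2 x.2.2.symm)⟩
        left_inv := fun x => rfl
        right_inv := fun x => rfl
        map_add' := fun x y => rfl })
  have hrange : Module.finrank ℤ f.range = Module.finrank ℤ ↥(H ⊓ minusPart s) := by
    have h := Submodule.finrank_quotient_add_finrank f.range
    rw [Module.finrank_eq_zero_iff_isTorsion.2, zero_add] at h
    · exact h
    intro x
    obtain ⟨x, rfl⟩ := Submodule.Quotient.mk_surjective _ x
    refine ⟨⟨2, mem_nonZeroDivisors_of_ne_zero two_ne_zero⟩, ?_⟩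
    change Submodule.Quotient.mk ((2 : ℤ) • x) = 0
    rw [Submodule.Quotient.mk_eq_zero]
    refine ⟨⟨x.1, x.2.1⟩, Subtype.ext ?_⟩
    have h : s x = -x := x.2.2
    change (x : B) - s x = (2 : ℤ) • (x : B)
    rw [h, two_zsmul, sub_neg_eq_add]
  have h := Submodule.finrank_quotient_add_finrank f.ker
  rw [f.quotKerEquivRange.finrank_eq, hker, hrange, add_comm] at h
  exact h.symm

end Involution

end AbelianGroups

section LocalizedModule

variable {M M' : Type*} [AddCommGroup M] [AddCommGroup M'] {_ : Module ℤ M} {_ : Module ℤ M'}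
  (f : M →ₗ[ℤ] M') [IsLocalizedModule (Submonoid.powers (2 : ℤ)) f]

include f in
theorem IsLocalizedModule.two_pow_nsmul_bijective (n : ℕ) :
    Function.Bijective fun y : M' => 2 ^ n • y := by
  have h := IsLocalizedModule.map_units (S := Submonoid.powers (2 : ℤ)) f
    (⟨2 ^ n, n, rfl⟩ : Submonoid.powers (2 : ℤ))
  convert (Module.End.isUnit_iff _).1 h using 2 with y
  rw [Module.algebraMap_end_apply, ← Nat.cast_smul_eq_nsmul ℤ, Nat.cast_pow, Nat.cast_ofNat]

theorem IsLocalizedModule.exists_two_pow_nsmul_eq (y : M') :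
    ∃ (n : ℕ) (b : M), 2 ^ n • y = f b := by
  obtain ⟨⟨b, ⟨_, n, rfl⟩⟩, h⟩ := IsLocalizedModule.surj (Submonoid.powers (2 : ℤ)) f y
  refine ⟨n, b, ?_⟩
  rw [← Nat.cast_smul_eq_nsmul ℤ, Nat.cast_pow, Nat.cast_ofNat]
  exact h

end LocalizedModule

section Dihedral

variable {q : ℕ} {B : Type*} [AddCommGroup B] [DistribMulAction (DihedralGroup q) B]

theorem mem_fixedBy {H : Subgroup (DihedralGroup q)} {x : B} :
    x ∈ fixedBy q B H ↔ ∀ h ∈ H, h • x = x := Iff.rfl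

theorem mem_fixedBy_closure_singleton {g : DihedralGroup q} {x : B} :
    x ∈ fixedBy q B (Subgroup.closure {g}) ↔ g • x = x := by
  refine ⟨fun h => h g (Subgroup.subset_closure rfl), fun h => ?_⟩
  have : Subgroup.closure {g} ≤ MulAction.stabilizer (DihedralGroup q) x := by
    rw [Subgroup.closure_le]
    rintro _ rfl
    exact h
  exact fun g hg => this hg

variable (q B) in
/-- The action of the reflection `sr 0`. -/
abbrev reflection : B →+ B := DistribSMul.toAddMonoidHom B (sr 0 : DihedralGroup q)

variable (q B) in
/-- The points fixed by the rotations. -/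
abbrev fixedG : AddSubgroup B := fixedBy q B (Subgroup.closure {(r 1 : DihedralGroup q)})

theorem reflection_reflection (x : B) : reflection q B (reflection q B x) = x := by
  change (sr 0 : DihedralGroup q) • (sr 0 : DihedralGroup q) • x = x
  rw [smul_smul, sr_mul_self, one_smul]

theorem reflection_r_smul (i : ZMod q) (x : B) :
    reflection q B ((r i : DihedralGroup q) • x) = (r (-i) : DihedralGroup q) • reflection q B x := by
  change (sr 0 : DihedralGroup q) • (r i : DihedralGroup q) • x =
    (r (-i) : DihedralGroup q) • (sr 0 : DihedralGroup q) • x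
  rw [smul_smul, smul_smul, sr_mul_r, r_mul_sr, sub_neg_eq_add]

theorem sr_smul (i : ZMod q) (x : B) :
    (sr i : DihedralGroup q) • x = reflection q B ((r i : DihedralGroup q) • x) := by
  change _ = (sr 0 : DihedralGroup q) • (r i : DihedralGroup q) • x
  rw [smul_smul, sr_mul_r, zero_add]

theorem mem_augG {x : B} : x ∈ augG q B ↔ ∃ y : B, y - (r 1 : DihedralGroup q) • y = x := Iff.rfl

variable [NeZero q]

theorem r_smul_of_mem_fixedG {x : B} (hx : x ∈ fixedG q B) (i : ZMod q) :
    (r i : DihedralGroup q) • x = x := by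
  refine mem_fixedBy.1 hx (r i) ?_
  rw [← ZMod.natCast_zmod_val i, ← r_one_pow]
  exact Subgroup.pow_mem _ (Subgroup.mem_closure_singleton_self _) _

theorem reflection_mem_fixedG {x : B} (hx : x ∈ fixedG q B) : reflection q B x ∈ fixedG q B := by
  have h := reflection_r_smul (q := q) (-1) x
  rw [r_smul_of_mem_fixedG hx, neg_neg] at h
  exact mem_fixedBy_closure_singleton.2 h.symm

theorem fixedBy_top : fixedBy q B ⊤ = fixedG q B ⊓ plusPart (reflection q B) := by
  ext x
  refine ⟨fun h => ⟨fun g _ => h g trivial, h _ trivial⟩, ?_⟩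
  rintro ⟨h1, h2⟩ (i | i) -
  · exact r_smul_of_mem_fixedG h1 i
  · rw [sr_smul, r_smul_of_mem_fixedG h1]
    exact h2

theorem normG_apply (x : B) : normG q B x = ∑ i : ZMod q, (r i : DihedralGroup q) • x := rfl

theorem normG_r_smul (i : ZMod q) (x : B) :
    normG q B ((r i : DihedralGroup q) • x) = normG q B x := by
  simp only [normG_apply, smul_smul, r_mul_r]
  exact Equiv.sum_comp (Equiv.addRight i) fun j => (r j : DihedralGroup q) • x

theorem normG_mem_fixedG (x : B) : normG q B x ∈ fixedG q B := by
  rw [mem_fixedBy_closure_singleton (q := q), normG_apply, Finset.smul_sum]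
  simp only [smul_smul, r_mul_r]
  exact Equiv.sum_comp (Equiv.addLeft (1 : ZMod q)) fun j => (r j : DihedralGroup q) • x

theorem reflection_normG (x : B) :
    reflection q B (normG q B x) = normG q B (reflection q B x) := by
  simp only [normG_apply, map_sum, reflection_r_smul]
  exact Equiv.sum_comp (Equiv.neg (ZMod q)) fun j => (r j : DihedralGroup q) • reflection q B x

theorem normG_of_mem_fixedG {x : B} (hx : x ∈ fixedG q B) : normG q B x = q • x := by
  simp [normG_apply, r_smul_of_mem_fixedG hx]

theorem sub_r_smul_mem_augG (i : ZMod q) (x : B) : x - (r i : DihedralGroup q) • x ∈ augG q B := by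
  rw [← ZMod.natCast_zmod_val i]
  induction i.val with
  | zero => simp [r_zero]
  | succ n ih =>
    have h : (r ((n + 1 : ℕ) : ZMod q) : DihedralGroup q) • x =
        (r 1 : DihedralGroup q) • (r (n : ZMod q) : DihedralGroup q) • x := by
      rw [smul_smul, r_mul_r, Nat.cast_succ, add_comm]
    rw [h, ← sub_add_sub_cancel x ((r (n : ZMod q) : DihedralGroup q) • x)]
    exact add_mem ih (mem_augG.2 ⟨_, rfl⟩)

theorem nsmul_sub_normG_mem_augG (x : B) : q • x - normG q B x ∈ augG q B := by
  have : q • x - normG q B x = ∑ i : ZMod q, (x - (r i : DihedralGroup q) • x) := by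
    simp [normG_apply, Finset.sum_sub_distrib]
  rw [this]
  exact sum_mem fun i _ => sub_r_smul_mem_augG i x

theorem augG_le_ker_normG : augG q B ≤ (normG q B).ker := by
  intro x hx
  obtain ⟨y, rfl⟩ := mem_augG.1 hx
  rw [AddMonoidHom.mem_ker, map_sub, normG_r_smul, sub_self]

theorem reflection_mem_augG {x : B} (hx : x ∈ augG q B) : reflection q B x ∈ augG q B := by
  obtain ⟨y, rfl⟩ := mem_augG.1 hx
  rw [map_sub, reflection_r_smul]
  exact sub_r_smul_mem_augG _ _

theorem reflection_mem_ker_normG {x : B} (hx : x ∈ (normG q B).ker) :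
    reflection q B x ∈ (normG q B).ker := by
  rw [AddMonoidHom.mem_ker, ← reflection_normG, AddMonoidHom.mem_ker.1 hx, map_zero]

theorem reflection_mem_range_normG {x : B} (hx : x ∈ (normG q B).range) :
    reflection q B x ∈ (normG q B).range := by
  obtain ⟨y, rfl⟩ := hx
  exact ⟨_, (reflection_normG y).symm⟩

theorem nsmul_mem_augG {x : B} (hx : x ∈ (normG q B).ker) : q • x ∈ augG q B := by
  simpa [AddMonoidHom.mem_ker.1 hx] using nsmul_sub_normG_mem_augG (q := q) x

theorem nsmul_mem_range_normG {x : B} (hx : x ∈ fixedG q B) : q • x ∈ (normG q B).range :=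
  ⟨x, normG_of_mem_fixedG hx⟩

theorem nsmul_eq_zero_of_mem_augG_inf_fixedG {x : B} (hx : x ∈ augG q B ⊓ fixedG q B) :
    q • x = 0 := by
  exact (normG_of_mem_fixedG hx.2).symm.trans (augG_le_ker_normG hx.1)

theorem card_H0G : Nat.card (H0G q B) = (normG q B).range.relIndex (fixedG q B) := rfl

/-- The first cohomology of the rotation subgroup is the Tate cohomology in degree `-1`. -/
theorem card_H1G : Nat.card (H1G q B) = (augG q B).relIndex (normG q B).ker := by
  let ev : (ZMod q → B) →+ B := Pi.evalAddMonoidHom (fun _ => B) 1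
  have hmap : (Z1G q B).map ev = (normG q B).ker := by
    ext b
    constructor
    · rintro ⟨f, hf, rfl⟩
      have h := Finset.sum_congr (s₁ := Finset.univ) rfl fun (i : ZMod q) _ => hf i 1
      have h' : ∑ i, f (i + 1) = ∑ i, f i := Equiv.sum_comp (Equiv.addRight (1 : ZMod q)) f
      rw [Finset.sum_add_distrib, h', left_eq_add] at h
      exact h
    · intro hb
      let F : ℕ → B := fun n => ∑ j ∈ Finset.range n, (r (j : ZMod q) : DihedralGroup q) • b
      have hadd (m n : ℕ) : F (m + n) = F m + (r (m : ZMod q) : DihedralGroup q) • F n := by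
        simp only [F, Finset.sum_range_add, Finset.smul_sum, smul_smul, r_mul_r, Nat.cast_add]
      have hq : F q = 0 := by
        rw [← AddMonoidHom.mem_ker.1 hb, normG_apply]
        refine Finset.sum_bij' (fun j _ => (j : ZMod q)) (fun i _ => i.val) ?_ ?_ ?_ ?_ ?_
        · simp
        · simp [ZMod.val_lt]
        · intro j hj
          exact ZMod.val_cast_of_lt (Finset.mem_range.1 hj)
        · simp
        · simp
      have hmul (k : ℕ) : F (q * k) = 0 := by
        induction k with
        | zero => simp [F]
        | succ k ih => rw [Nat.mul_succ, hadd, ih, hq, smul_zero, add_zero]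
      have hmod (n : ℕ) : F (n % q) = F n := by
        conv_rhs => rw [← Nat.mod_add_div n q, hadd, hmul, smul_zero, add_zero]
      refine ⟨fun i => F i.val, fun i j => ?_, ?_⟩
      · dsimp only
        rw [ZMod.val_add, hmod, hadd, ZMod.natCast_zmod_val]
      · change F (1 : ZMod q).val = b
        rw [ZMod.val_one_eq_one_mod, hmod]
        simp [F, r_zero]
  have hcomap : (augG q B).comap ev ⊓ Z1G q B = B1G q B ⊓ Z1G q B := by
    ext f
    refine and_congr_left fun hf => ?_
    constructor
    · intro h
      obtain ⟨y, hy⟩ := mem_augG.1 h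
      change _ = f 1 at hy
      have hf0 : f 0 = 0 := by simpa [r_zero] using hf 0 0
      have key (n : ℕ) : f n = (r (n : ZMod q) : DihedralGroup q) • (-y) - (-y) := by
        induction n with
        | zero => simp [hf0, r_zero]
        | succ n ih =>
          rw [Nat.cast_succ, hf, ih, ← hy, smul_sub, smul_smul, r_mul_r]
          simp only [smul_neg]
          abel
      refine ⟨-y, ?_⟩
      ext i
      rw [← ZMod.natCast_zmod_val i]
      exact (key _).symm
    · rintro ⟨y, rfl⟩
      exact mem_augG.2 ⟨-y, by
        change _ = (r 1 : DihedralGroup q) • y - y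
        rw [smul_neg]
        abel⟩
  rw [← hmap, ← AddSubgroup.relIndex_comap, ← AddSubgroup.inf_relIndex_right, hcomap,
    AddSubgroup.inf_relIndex_right]
  rfl

/-- The fixed points of two reflections generate, up to the points fixed by rotations, the same
subgroup as the fixed points of one reflection and the augmentation subgroup. -/
theorem fixedBy_sup_eq (hq : Odd q) :
    fixedBy q B (Subgroup.closure {(sr 0 : DihedralGroup q)}) ⊔
      fixedBy q B (Subgroup.closure {(sr 0 * r 1 : DihedralGroup q)}) ⊔ fixedG q B =
    plusPart (reflection q B) ⊔ augG q B ⊔ fixedG q B := by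
  have hP : fixedBy q B (Subgroup.closure {(sr 0 : DihedralGroup q)}) =
      plusPart (reflection q B) := by
    ext x
    exact mem_fixedBy_closure_singleton
  have hP' {x : B} : x ∈ fixedBy q B (Subgroup.closure {(sr 0 * r 1 : DihedralGroup q)}) ↔
      reflection q B ((r 1 : DihedralGroup q) • x) = x := by
    rw [mem_fixedBy_closure_singleton, sr_mul_r, zero_add, sr_smul]
  rw [hP]
  apply le_antisymm
  · refine sup_le (sup_le (le_sup_left.trans le_sup_left) fun x hx => ?_) le_sup_right
    rw [hP'] at hx
    refine AddSubgroup.mem_of_coprime_nsmul_mem hq.coprime_two_right ?_ ?_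
    · rw [← sub_add_cancel (q • x) (normG q B x)]
      exact add_mem (AddSubgroup.mem_sup_left (AddSubgroup.mem_sup_right
        (nsmul_sub_normG_mem_augG x))) (AddSubgroup.mem_sup_right (normG_mem_fixedG x))
    · have h : 2 • x = (x + reflection q B x) -
          reflection q B (x - (r 1 : DihedralGroup q) • x) := by
        rw [map_sub, hx, two_nsmul]
        abel
      rw [h]
      exact AddSubgroup.mem_sup_left (sub_mem
        (AddSubgroup.mem_sup_left (add_mem_plusPart reflection_reflection x))
        (AddSubgroup.mem_sup_right (reflection_mem_augG (sub_r_smul_mem_augG 1 x))))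
  · refine sup_le_sup_right (sup_le le_sup_left fun x hx => ?_) _
    obtain ⟨y, rfl⟩ := mem_augG.1 hx
    let t := reflection q B ((r 1 : DihedralGroup q) • y)
    have ht : reflection q B ((r 1 : DihedralGroup q) • t) = y := by
      rw [reflection_r_smul]
      change (r (-1) : DihedralGroup q) • reflection q B (reflection q B _) = y
      rw [reflection_reflection, smul_smul, r_mul_r, neg_add_cancel, r_zero, one_smul]
    have h : y - (r 1 : DihedralGroup q) • y = (y + t) - ((r 1 : DihedralGroup q) • y + t) := by
      abel
    rw [h]
    refine sub_mem (AddSubgroup.mem_sup_right (hP'.2 ?_))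
      (AddSubgroup.mem_sup_left (add_mem_plusPart reflection_reflection _))
    rw [smul_add, map_add, ht, add_comm]

theorem index_plusPart_sup_augG_sup_fixedG (hq : Odd q) :
    (plusPart (reflection q B) ⊔ augG q B ⊔ fixedG q B).index =
      (augG q B ⊓ minusPart (reflection q B) ⊔ fixedG q B ⊓ minusPart (reflection q B)).relIndex
        (minusPart (reflection q B)) := by
  set s := reflection q B with hs_def
  have hs : ∀ x, s (s x) = x := reflection_reflection
  have hqS (x : B) : q • x ∈ plusPart s ⊔ augG q B ⊔ fixedG q B := by
    rw [← sub_add_cancel (q • x) (normG q B x)]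
    exact add_mem (AddSubgroup.mem_sup_left (AddSubgroup.mem_sup_right
      (nsmul_sub_normG_mem_augG x))) (AddSubgroup.mem_sup_right (normG_mem_fixedG x))
  have hsS : ∀ x ∈ plusPart s ⊔ augG q B ⊔ fixedG q B,
      s x ∈ plusPart s ⊔ augG q B ⊔ fixedG q B := by
    intro x hx
    obtain ⟨y, hy, f, hf, rfl⟩ := AddSubgroup.mem_sup.1 hx
    obtain ⟨p, hp, i, hi, rfl⟩ := AddSubgroup.mem_sup.1 hy
    rw [map_add, map_add, mem_plusPart.1 hp]
    exact add_mem (AddSubgroup.mem_sup_left (add_mem (AddSubgroup.mem_sup_left hp)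
      (AddSubgroup.mem_sup_right (reflection_mem_augG hi))))
      (AddSubgroup.mem_sup_right (reflection_mem_fixedG hf))
  rw [← AddSubgroup.relIndex_top_right, relIndex_eq_mul_of_involution hs hq le_top hsS
    (fun _ _ => trivial) (fun x _ => hqS x), top_inf_eq, top_inf_eq,
    AddSubgroup.relIndex_eq_one.2 (le_sup_left.trans le_sup_left), one_mul,
    ← AddSubgroup.inf_relIndex_right]
  congr 1
  apply le_antisymm
  · rintro x ⟨hx, hxV⟩
    refine AddSubgroup.mem_of_coprime_nsmul_mem hq.coprime_two_right ?_ ?_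
    · have hN : normG q B x ∈ minusPart s := by
        rw [mem_minusPart, reflection_normG, ← hs_def, mem_minusPart.1 hxV, map_neg]
      rw [← sub_add_cancel (q • x) (normG q B x)]
      exact add_mem (AddSubgroup.mem_sup_left
        ⟨nsmul_sub_normG_mem_augG x, AddSubgroup.sub_mem _ (nsmul_mem hxV q) hN⟩)
        (AddSubgroup.mem_sup_right ⟨normG_mem_fixedG x, hN⟩)
    · obtain ⟨y, hy, f, hf, rfl⟩ := AddSubgroup.mem_sup.1 hx
      obtain ⟨p, hp, i, hi, rfl⟩ := AddSubgroup.mem_sup.1 hy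
      have h : 2 • (p + i + f) = (i - s i) + (f - s f) := by
        rw [two_nsmul]
        nth_rw 2 [← neg_neg (p + i + f)]
        rw [← mem_minusPart.1 hxV, map_add, map_add, mem_plusPart.1 hp]
        abel
      rw [h]
      exact add_mem (AddSubgroup.mem_sup_left
        ⟨AddSubgroup.sub_mem _ hi (reflection_mem_augG hi), sub_mem_minusPart hs i⟩)
        (AddSubgroup.mem_sup_right
        ⟨AddSubgroup.sub_mem _ hf (reflection_mem_fixedG hf), sub_mem_minusPart hs f⟩)
  · exact sup_le (inf_le_inf_right _ (le_sup_right.trans le_sup_left))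
      (inf_le_inf_right _ le_sup_right)

theorem map_normG_minusPart (hq : Odd q) :
    (minusPart (reflection q B)).map (normG q B) =
      (normG q B).range ⊓ (fixedG q B ⊓ minusPart (reflection q B)) := by
  apply le_antisymm
  · rintro _ ⟨x, hx, rfl⟩
    refine ⟨⟨x, rfl⟩, normG_mem_fixedG x, mem_minusPart.2 ?_⟩
    rw [reflection_normG, mem_minusPart.1 hx, map_neg]
  · rintro _ ⟨⟨x, rfl⟩, hF, hV⟩
    refine AddSubgroup.mem_of_coprime_nsmul_mem hq.coprime_two_right
      ⟨_, hV, normG_of_mem_fixedG hF⟩ ⟨_, sub_mem_minusPart reflection_reflection x, ?_⟩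
    rw [map_sub, ← reflection_normG, mem_minusPart.1 hV, two_nsmul, sub_neg_eq_add]

/-- The Euler characteristic of the norm map on a subgroup of points fixed by rotations. -/
theorem relIndex_map_normG [Module.Finite ℤ B] {M : AddSubgroup B} (hM : M ≤ fixedG q B) :
    (M.map (normG q B)).relIndex M =
      Nat.card ↥(M ⊓ (normG q B).ker) * q ^ Module.finrank ℤ M := by
  have : Module.Finite ℤ M := inferInstanceAs (Module.Finite ℤ (AddSubgroup.toIntSubmodule M))
  have hrange : (M.map (normG q B)).addSubgroupOf M = (nsmulAddMonoidHom (α := M) q).range := by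
    ext x
    constructor
    · rintro ⟨y, hy, hxy⟩
      exact ⟨⟨y, hy⟩, Subtype.ext ((normG_of_mem_fixedG (hM hy)).symm.trans hxy)⟩
    · rintro ⟨y, rfl⟩
      exact ⟨y, y.2, normG_of_mem_fixedG (hM y.2)⟩
  have hker : Nat.card (nsmulAddMonoidHom (α := M) q).ker = Nat.card ↥(M ⊓ (normG q B).ker) :=
    Nat.card_congr
      { toFun := fun x => ⟨x.1, x.1.2,
          (normG_of_mem_fixedG (hM x.1.2)).trans (congrArg Subtype.val x.2)⟩
        invFun := fun x => ⟨⟨x.1, x.2.1⟩,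
          Subtype.ext ((normG_of_mem_fixedG (hM x.2.1)).symm.trans x.2.2)⟩
        left_inv := fun _ => rfl
        right_inv := fun _ => rfl }
  rw [AddSubgroup.relIndex, hrange, index_range_nsmul_eq_card_ker_mul_pow M (NeZero.ne q), hker]

section Localization

variable (B) in
/-- The localization map `B → B ⊗ ℤ[1/2]`. -/
noncomputable abbrev toHalf : B →+ Bhalf B :=
  (LocalizedModule.mkLinearMap (Submonoid.powers (2 : ℤ)) B).toAddMonoidHom

theorem two_pow_nsmul_bijective (n : ℕ) : Function.Bijective fun y : Bhalf B => 2 ^ n • y :=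
  IsLocalizedModule.two_pow_nsmul_bijective
    (LocalizedModule.mkLinearMap (Submonoid.powers (2 : ℤ)) B) n

theorem exists_two_pow_nsmul_eq_toHalf (y : Bhalf B) :
    ∃ (n : ℕ) (b : B), 2 ^ n • y = toHalf B b :=
  IsLocalizedModule.exists_two_pow_nsmul_eq
    (LocalizedModule.mkLinearMap (Submonoid.powers (2 : ℤ)) B) y

theorem exists_two_pow_nsmul_eq {a b : B} (h : toHalf B a = toHalf B b) :
    ∃ n : ℕ, 2 ^ n • a = 2 ^ n • b := by
  obtain ⟨⟨_, n, rfl⟩, h⟩ := IsLocalizedModule.exists_of_eq (S := Submonoid.powers (2 : ℤ))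
    (f := LocalizedModule.mkLinearMap (Submonoid.powers (2 : ℤ)) B) h
  refine ⟨n, ?_⟩
  change ((2 : ℤ) ^ n) • a = ((2 : ℤ) ^ n) • b at h
  rw [← natCast_zsmul, ← natCast_zsmul]
  push_cast
  exact h

omit [NeZero q] in
theorem lact_toHalf (g : DihedralGroup q) (b : B) : lact q B g (toHalf B b) = toHalf B (g • b) :=
  IsLocalizedModule.map_LocalizedModules (Submonoid.powers (2 : ℤ))
    (DistribSMul.toAddMonoidHom B g).toIntLinearMap b 1

theorem normD2_apply (y : Bhalf B) : normD2 q B y = ∑ g : DihedralGroup q, lact q B g y := rfl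

theorem normD2_toHalf (b : B) :
    normD2 q B (toHalf B b) = toHalf B (normG q B b + reflection q B (normG q B b)) := by
  rw [normD2_apply, ← Equiv.sum_comp equivSum.symm, Fintype.sum_sum_type]
  have h1 (i : ZMod q) : lact q B (equivSum.symm (Sum.inl i)) (toHalf B b) =
      toHalf B ((r i : DihedralGroup q) • b) := lact_toHalf _ b
  have h2 (i : ZMod q) : lact q B (equivSum.symm (Sum.inr i)) (toHalf B b) =
      toHalf B (reflection q B ((r i : DihedralGroup q) • b)) := by
    rw [← sr_smul]
    exact lact_toHalf _ b
  simp only [h1, h2, ← map_sum, ← map_add, normG_apply]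

theorem normD2_lact (g : DihedralGroup q) (y : Bhalf B) :
    normD2 q B (lact q B g y) = normD2 q B y := by
  obtain ⟨n, b, h⟩ := exists_two_pow_nsmul_eq_toHalf y
  apply (two_pow_nsmul_bijective n).1
  simp only
  rw [← map_nsmul, ← map_nsmul, ← map_nsmul, h, lact_toHalf, normD2_toHalf, normD2_toHalf]
  rcases g with i | i
  · rw [normG_r_smul]
  · rw [sr_smul, ← reflection_normG, normG_r_smul, reflection_reflection, add_comm]

theorem lact_normD2 (g : DihedralGroup q) (y : Bhalf B) :
    lact q B g (normD2 q B y) = normD2 q B y := by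
  obtain ⟨n, b, h⟩ := exists_two_pow_nsmul_eq_toHalf y
  apply (two_pow_nsmul_bijective n).1
  simp only
  rw [← map_nsmul, ← map_nsmul, h, normD2_toHalf, lact_toHalf, smul_add]
  have hF := normG_mem_fixedG (q := q) b
  have hF' := reflection_mem_fixedG hF
  rcases g with i | i
  · rw [r_smul_of_mem_fixedG hF, r_smul_of_mem_fixedG hF']
  · rw [sr_smul, sr_smul, r_smul_of_mem_fixedG hF, r_smul_of_mem_fixedG hF',
      reflection_reflection, add_comm]

theorem range_normD2_le : (normD2 q B).range ≤ fixedD2 q B := by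
  rintro _ ⟨y, rfl⟩ g
  exact lact_normD2 g y

omit [NeZero q] in
theorem mem_augD2 (g : DihedralGroup q) (y : Bhalf B) : y - lact q B g y ∈ augD2 q B :=
  AddSubgroup.subset_closure ⟨g, y, rfl⟩

theorem augD2_le : augD2 q B ≤ (normD2 q B).ker := by
  rw [augD2, AddSubgroup.closure_le]
  rintro _ ⟨g, y, rfl⟩
  change normD2 q B _ = 0
  rw [map_sub, normD2_lact, sub_self]

theorem card_dihedral_smul_sub_normD2_mem (y : Bhalf B) :
    (2 * q) • y - normD2 q B y ∈ augD2 q B := by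
  have h : (2 * q) • y - normD2 q B y = ∑ g : DihedralGroup q, (y - lact q B g y) := by
    rw [Finset.sum_sub_distrib, normD2_apply, Finset.sum_const, Finset.card_univ,
      DihedralGroup.card]
  rw [h]
  exact sum_mem fun g _ => mem_augD2 g y

theorem card_H0Dhalf (hq : Odd q) :
    Nat.card (H0Dhalf q B) =
      (normG q B).range.relIndex (fixedG q B ⊓ plusPart (reflection q B)) := by
  have hsup : (fixedG q B ⊓ plusPart (reflection q B)).map (toHalf B) ⊔ (normD2 q B).range =
      fixedD2 q B := by
    apply le_antisymm
    · refine sup_le ?_ range_normD2_le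
      rw [← fixedBy_top]
      rintro _ ⟨b, hb, rfl⟩ g
      rw [lact_toHalf, mem_fixedBy.1 hb g trivial]
    · intro y hy
      obtain ⟨n, b, hb⟩ := exists_two_pow_nsmul_eq_toHalf y
      have hg (g : DihedralGroup q) : ∃ m, 2 ^ m • g • b = 2 ^ m • b := by
        refine exists_two_pow_nsmul_eq ?_
        rw [← lact_toHalf, ← hb, map_nsmul, hy g]
      choose m hm using hg
      let k := ∑ g, m g
      have hk (g : DihedralGroup q) : g • 2 ^ k • b = 2 ^ k • b := by
        obtain ⟨c, hc⟩ : 2 ^ m g ∣ 2 ^ k :=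
          pow_dvd_pow 2 (Finset.single_le_sum (fun _ _ => Nat.zero_le _) (Finset.mem_univ g))
        rw [hc, mul_comm, mul_smul, smul_comm g, smul_comm g, hm]
      refine AddSubgroup.mem_of_coprime_nsmul_mem (m := q) (n := 2 ^ (k + n))
        (hq.coprime_two_right.pow_right _) (AddSubgroup.mem_sup_right ?_)
        (AddSubgroup.mem_sup_left ⟨2 ^ k • b, ?_, ?_⟩)
      · obtain ⟨z, rfl⟩ := (two_pow_nsmul_bijective 1).2 y
        refine ⟨z, ?_⟩
        apply (two_pow_nsmul_bijective 1).1
        simp only [pow_one]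
        rw [← map_nsmul, normD2_apply]
        rw [Finset.sum_congr rfl fun g _ => by simpa using hy g]
        rw [Finset.sum_const, Finset.card_univ, DihedralGroup.card, mul_smul, smul_comm]
      · rw [← fixedBy_top]
        exact mem_fixedBy.2 fun g _ => hk g
      · rw [map_nsmul, ← hb, pow_add, mul_smul]
  have hcomap : (normD2 q B).range.comap (toHalf B) ⊓ (fixedG q B ⊓ plusPart (reflection q B)) =
      (normG q B).range ⊓ (fixedG q B ⊓ plusPart (reflection q B)) := by
    ext b
    refine and_congr_left fun hb => ?_
    constructor
    · rintro ⟨y, hy⟩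
      obtain ⟨n, c, hc⟩ := exists_two_pow_nsmul_eq_toHalf y
      have h : toHalf B (2 ^ n • b) =
          toHalf B (normG q B c + reflection q B (normG q B c)) := by
        rw [map_nsmul, ← normD2_toHalf, ← hc, map_nsmul, hy]
      obtain ⟨m, hm⟩ := exists_two_pow_nsmul_eq h
      refine AddSubgroup.mem_of_coprime_nsmul_mem (m := q) (n := 2 ^ (m + n))
        (hq.coprime_two_right.pow_right _) (nsmul_mem_range_normG hb.1) ?_
      have hc' : normG q B c ∈ (normG q B).range := ⟨c, rfl⟩
      rw [pow_add, mul_smul, hm]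
      exact nsmul_mem (add_mem hc' (reflection_mem_range_normG hc')) _
    · rintro ⟨c, rfl⟩
      obtain ⟨z, hz⟩ := (two_pow_nsmul_bijective 1).2 (toHalf B c)
      refine ⟨z, (two_pow_nsmul_bijective 1).1 ?_⟩
      simp only at hz ⊢
      rw [← map_nsmul, hz, normD2_toHalf, mem_plusPart.1 hb.2, pow_one, two_nsmul, map_add]
  change (normD2 q B).range.relIndex (fixedD2 q B) = _
  rw [← hsup, AddSubgroup.relIndex_sup_right, ← AddSubgroup.relIndex_comap,
    ← AddSubgroup.inf_relIndex_right, hcomap, AddSubgroup.inf_relIndex_right]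

theorem exists_two_pow_nsmul_mem_augG {y : Bhalf B} (hy : y ∈ augD2 q B) :
    ∃ n : ℕ, ∃ i ∈ augG q B, 2 ^ n • (y + lact q B (sr 0) y) = toHalf B i := by
  induction hy using AddSubgroup.closure_induction with
  | mem y hy =>
    obtain ⟨g, z, rfl⟩ := hy
    obtain ⟨n, b, hb⟩ := exists_two_pow_nsmul_eq_toHalf z
    refine ⟨n, _, ?_, by
      rw [nsmul_add, ← map_nsmul, nsmul_sub, ← map_nsmul, hb, lact_toHalf,
        ← map_sub, lact_toHalf, ← map_add]⟩
    change b - g • b + reflection q B (b - g • b) ∈ augG q B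
    have hI (i : ZMod q) := sub_r_smul_mem_augG i b
    rcases g with i | i
    · exact add_mem (hI i) (reflection_mem_augG (hI i))
    · have h : b - (sr i : DihedralGroup q) • b + reflection q B (b - (sr i : DihedralGroup q) • b) =
          b - (r i : DihedralGroup q) • b + reflection q B (b - (r i : DihedralGroup q) • b) := by
        rw [sr_smul, map_sub, map_sub, reflection_reflection]
        abel
      rw [h]
      exact add_mem (hI i) (reflection_mem_augG (hI i))
  | zero => exact ⟨0, 0, zero_mem _, by simp⟩
  | add x y _ _ hx hy =>
    obtain ⟨n, i, hi, hx⟩ := hx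
    obtain ⟨m, j, hj, hy⟩ := hy
    refine ⟨n + m, 2 ^ m • i + 2 ^ n • j, add_mem (nsmul_mem hi _) (nsmul_mem hj _), ?_⟩
    rw [map_add, map_add, map_nsmul, map_nsmul, ← hx, ← hy, smul_smul, smul_smul, ← pow_add,
      ← pow_add, add_comm m n, ← nsmul_add]
    congr 1
    abel
  | neg x _ hx =>
    obtain ⟨n, i, hi, hx⟩ := hx
    exact ⟨n, -i, neg_mem hi, by rw [map_neg, map_neg, ← hx, ← neg_add, neg_nsmul]⟩

theorem card_Hneg1Dhalf (hq : Odd q) :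
    Nat.card (Hneg1Dhalf q B) =
      (augG q B).relIndex ((normG q B).ker ⊓ plusPart (reflection q B)) := by
  have hsup : ((normG q B).ker ⊓ plusPart (reflection q B)).map (toHalf B) ⊔ augD2 q B =
      (normD2 q B).ker := by
    apply le_antisymm
    · refine sup_le ?_ augD2_le
      rintro _ ⟨b, hb, rfl⟩
      rw [AddMonoidHom.mem_ker, normD2_toHalf, AddMonoidHom.mem_ker.1 hb.1, map_zero, add_zero,
        map_zero]
    · intro y hy
      obtain ⟨n, b, hb⟩ := exists_two_pow_nsmul_eq_toHalf y
      have h : toHalf B (normG q B b + reflection q B (normG q B b)) = toHalf B 0 := by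
        rw [← normD2_toHalf, ← hb, map_nsmul, AddMonoidHom.mem_ker.1 hy, nsmul_zero, map_zero]
      obtain ⟨m, hm⟩ := exists_two_pow_nsmul_eq h
      have hmem : 2 ^ m • (b + reflection q B b) ∈
          (normG q B).ker ⊓ plusPart (reflection q B) := by
        refine ⟨?_, nsmul_mem (add_mem_plusPart reflection_reflection b) _⟩
        change normG q B _ = 0
        rw [map_nsmul, map_add, ← reflection_normG, hm, smul_zero]
      refine AddSubgroup.mem_of_coprime_nsmul_mem (m := q) (n := 2 ^ (m + n + 1))
        (hq.coprime_two_right.pow_right _) (AddSubgroup.mem_sup_right ?_) ?_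
      · obtain ⟨z, rfl⟩ := (two_pow_nsmul_bijective 1).2 y
        have hz : normD2 q B z = 0 := by
          apply (two_pow_nsmul_bijective 1).1
          simp only
          rw [← map_nsmul, nsmul_zero]
          exact hy
        have h := card_dihedral_smul_sub_normD2_mem (q := q) z
        rw [hz, sub_zero, mul_comm, mul_smul] at h
        simpa using h
      · have h : 2 ^ (m + n + 1) • y = toHalf B (2 ^ m • (b + reflection q B b)) +
            2 ^ (m + n) • (y - lact q B (sr 0) y) := by
          have h1 : toHalf B (reflection q B b) = 2 ^ n • lact q B (sr 0) y := by
            rw [← map_nsmul, hb, lact_toHalf]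
            rfl
          rw [map_nsmul, map_add, ← hb, h1, ← nsmul_add, smul_smul, ← pow_add, ← nsmul_add,
            pow_succ, mul_smul, two_nsmul]
          congr 1
          abel
        rw [h]
        exact add_mem (AddSubgroup.mem_sup_left ⟨_, hmem, rfl⟩)
          (AddSubgroup.mem_sup_right (nsmul_mem (mem_augD2 _ y) _))
  have hcomap : (augD2 q B).comap (toHalf B) ⊓ ((normG q B).ker ⊓ plusPart (reflection q B)) =
      augG q B ⊓ ((normG q B).ker ⊓ plusPart (reflection q B)) := by
    ext b
    refine and_congr_left fun hb => ?_
    constructor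
    · intro h
      obtain ⟨n, i, hi, h⟩ := exists_two_pow_nsmul_mem_augG h
      have h2 : toHalf B (2 ^ (n + 1) • b) = toHalf B i := by
        have h3 : lact q B (sr 0) (toHalf B b) = toHalf B b :=
          (lact_toHalf _ b).trans (congrArg _ (mem_plusPart.1 hb.2))
        rw [← h, h3, map_nsmul, pow_succ, mul_smul, two_nsmul]
      obtain ⟨m, hm⟩ := exists_two_pow_nsmul_eq h2
      refine AddSubgroup.mem_of_coprime_nsmul_mem (m := q) (n := 2 ^ (m + (n + 1)))
        (hq.coprime_two_right.pow_right _) (nsmul_mem_augG hb.1) ?_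
      rw [pow_add, mul_smul, hm]
      exact nsmul_mem hi _
    · intro h
      obtain ⟨y, rfl⟩ := mem_augG.1 h
      change toHalf B _ ∈ augD2 q B
      rw [map_sub, ← lact_toHalf]
      exact mem_augD2 _ _
  change (augD2 q B).relIndex (normD2 q B).ker = _
  rw [← hsup, AddSubgroup.relIndex_sup_right, ← AddSubgroup.relIndex_comap,
    ← AddSubgroup.inf_relIndex_right, hcomap, AddSubgroup.inf_relIndex_right]

end Localization

end Dihedral

/-- Let `D` be dihedral of order `2q` (`q` odd), with subgroups `G`, `Σ`,
`Σ'`, and let `B` be a `D`-module finitely generated over `ℤ`.  Then the index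
`(B : B^Σ + B^Σ' + B^G)` is finite and
`|Ĥ⁰(D, B⊗ℤ[1/2])| / |Ĥ⁻¹(D, B⊗ℤ[1/2])|
  = (B : B^Σ + B^Σ' + B^G) · Q(G,B) · |I_G B ∩ B^D| / |I_G B ∩ B^G| · q^(rk B^D − rk B^G)`,
where `Q(G, B) = |Ĥ⁰(G, B)|/|H¹(G, B)|` is the Herbrand quotient. -/
theorem tate_ratio_eq_index_formula (q : ℕ) [NeZero q] (hq : Odd q)
    (B : Type*) [AddCommGroup B] [DistribMulAction (DihedralGroup q) B]
    (hfg : AddGroup.FG B) :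
    Finite (B ⧸ (fixedBy q B (Subgroup.closure {(sr 0 : DihedralGroup q)}) ⊔
      fixedBy q B (Subgroup.closure {(sr 0 * r 1 : DihedralGroup q)}) ⊔
      fixedBy q B (Subgroup.closure {(r 1 : DihedralGroup q)}))) ∧
    (Nat.card (H0Dhalf q B) : ℚ) / (Nat.card (Hneg1Dhalf q B) : ℚ) =
      (Nat.card (B ⧸ (fixedBy q B (Subgroup.closure {(sr 0 : DihedralGroup q)}) ⊔
          fixedBy q B (Subgroup.closure {(sr 0 * r 1 : DihedralGroup q)}) ⊔
          fixedBy q B (Subgroup.closure {(r 1 : DihedralGroup q)}))) : ℚ) *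
        ((Nat.card (H0G q B) : ℚ) / (Nat.card (H1G q B) : ℚ)) *
        ((Nat.card ↥(augG q B ⊓ fixedBy q B (⊤ : Subgroup (DihedralGroup q))) : ℚ) /
          (Nat.card ↥(augG q B ⊓ fixedBy q B (Subgroup.closure {(r 1 : DihedralGroup q)})) : ℚ)) *
        (q : ℚ) ^
          ((Module.finrank ℤ ↥(fixedBy q B (⊤ : Subgroup (DihedralGroup q))) : ℤ) -
            (Module.finrank ℤ ↥(fixedBy q B (Subgroup.closure {(r 1 : DihedralGroup q)})) : ℤ)) := by
  have hfin : Module.Finite ℤ B := Module.Finite.iff_addGroup_fg.2 hfg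
  have hs : ∀ x, reflection q B (reflection q B x) = x := reflection_reflection
  let s := reflection q B
  let N := normG q B
  let I := augG q B
  let F := fixedG q B
  let V := minusPart s
  have hq0 : q ≠ 0 := NeZero.ne q
  have hindex : (plusPart s ⊔ I ⊔ F).index ≠ 0 := by
    rw [← AddSubgroup.relIndex_top_right]
    refine AddSubgroup.relIndex_ne_zero_of_nsmul_mem hq0 fun x _ => ?_
    rw [← sub_add_cancel (q • x) (normG q B x)]
    exact add_mem (AddSubgroup.mem_sup_left (AddSubgroup.mem_sup_right
      (nsmul_sub_normG_mem_augG x))) (AddSubgroup.mem_sup_right (normG_mem_fixedG x))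
  rw [fixedBy_sup_eq hq]
  have : (plusPart s ⊔ I ⊔ F).FiniteIndex := ⟨hindex⟩
  refine ⟨AddSubgroup.finite_quotient_of_finiteIndex, ?_⟩
  have hH0 : N.range.relIndex F = N.range.relIndex (F ⊓ plusPart s) * N.range.relIndex (F ⊓ V) :=
    relIndex_eq_mul_of_involution hs hq (by rintro _ ⟨x, rfl⟩; exact normG_mem_fixedG x)
      (fun _ => reflection_mem_range_normG) (fun _ => reflection_mem_fixedG)
      (fun _ => nsmul_mem_range_normG)
  have hH1 : I.relIndex N.ker = I.relIndex (N.ker ⊓ plusPart s) * I.relIndex (N.ker ⊓ V) :=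
    relIndex_eq_mul_of_involution hs hq augG_le_ker_normG
      (fun _ => reflection_mem_augG) (fun _ => reflection_mem_ker_normG)
      (fun _ => nsmul_mem_augG)
  have hK : Nat.card ↥(I ⊓ F) =
      Nat.card ↥(I ⊓ (F ⊓ plusPart s)) * Nat.card ↥(I ⊓ F ⊓ V) := by
    have h := relIndex_eq_mul_of_involution (L := ⊥) (H := I ⊓ F) hs hq bot_le
      (fun x hx => by rw [AddSubgroup.mem_bot.1 hx, map_zero]; exact zero_mem _)
      (fun x hx => ⟨reflection_mem_augG hx.1, reflection_mem_fixedG hx.2⟩)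
      (fun x hx => AddSubgroup.mem_bot.2 (nsmul_eq_zero_of_mem_augG_inf_fixedG hx))
    rwa [AddSubgroup.relIndex_bot_left, AddSubgroup.relIndex_bot_left,
      AddSubgroup.relIndex_bot_left, inf_assoc I F (plusPart s)] at h
  have hK0 : Nat.card ↥(I ⊓ F) ≠ 0 := by
    rw [← AddSubgroup.relIndex_bot_left]
    exact AddSubgroup.relIndex_ne_zero_of_nsmul_mem hq0
      fun x hx => AddSubgroup.mem_bot.2 (nsmul_eq_zero_of_mem_augG_inf_fixedG hx)
  have hH10 : I.relIndex N.ker ≠ 0 :=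
    AddSubgroup.relIndex_ne_zero_of_nsmul_mem hq0 fun x hx => nsmul_mem_augG hx
  have hH00 : N.range.relIndex F ≠ 0 :=
    AddSubgroup.relIndex_ne_zero_of_nsmul_mem hq0 fun x hx => nsmul_mem_range_normG hx
  have hM0 : Nat.card ↥(F ⊓ V ⊓ N.ker) ≠ 0 := by
    rw [← AddSubgroup.relIndex_bot_left]
    refine AddSubgroup.relIndex_ne_zero_of_nsmul_mem hq0 fun x hx => AddSubgroup.mem_bot.2 ?_
    rw [← normG_of_mem_fixedG hx.1.1]
    exact hx.2
  have hrank := finrank_eq_add_of_involution hs (H := F) fun _ => reflection_mem_fixedG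
  have hmain : (plusPart s ⊔ I ⊔ F).index * N.range.relIndex (F ⊓ V) =
      q ^ Module.finrank ℤ ↥(F ⊓ V) * Nat.card ↥(I ⊓ F ⊓ V) * I.relIndex (N.ker ⊓ V) := by
    have h := relIndex_sup_mul_relIndex_map_mul_card N (V := V) (I := I ⊓ V) (M := F ⊓ V)
      (by rw [inf_comm V]; exact inf_le_inf_right _ augG_le_ker_normG) inf_le_right
      (by rw [map_normG_minusPart hq]; exact inf_le_right)
    rw [relIndex_map_normG inf_le_left, map_normG_minusPart hq, AddSubgroup.inf_relIndex_right,
      ← index_plusPart_sup_augG_sup_fixedG hq, ← inf_inf_distrib_right] at h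
    have h' : (I ⊓ V).relIndex (V ⊓ N.ker) = I.relIndex (N.ker ⊓ V) := by
      rw [← AddSubgroup.inf_relIndex_right, inf_assoc, ← inf_assoc V V, inf_idem,
        AddSubgroup.inf_relIndex_right, inf_comm]
    rw [h'] at h
    refine Nat.eq_of_mul_eq_mul_left (Nat.pos_of_ne_zero hM0) ?_
    linarith
  rw [card_H0Dhalf hq, card_Hneg1Dhalf hq, card_H0G, card_H1G, fixedBy_top]
  change (N.range.relIndex (F ⊓ plusPart s) : ℚ) / (I.relIndex (N.ker ⊓ plusPart s) : ℚ) =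
    ((plusPart s ⊔ I ⊔ F).index : ℚ) * ((N.range.relIndex F : ℚ) / (I.relIndex N.ker : ℚ)) *
      ((Nat.card ↥(I ⊓ (F ⊓ plusPart s)) : ℚ) / (Nat.card ↥(I ⊓ F) : ℚ)) *
      (q : ℚ) ^ ((Module.finrank ℤ ↥(F ⊓ plusPart s) : ℤ) - (Module.finrank ℤ F : ℤ))
  have hexp : (Module.finrank ℤ ↥(F ⊓ plusPart s) : ℤ) - (Module.finrank ℤ F : ℤ) =
      -(Module.finrank ℤ ↥(F ⊓ V) : ℤ) := by
    rw [hrank]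
    push_cast
    ring
  rw [hH0] at hH00 ⊢
  rw [hH1] at hH10 ⊢
  rw [hK] at hK0 ⊢
  rw [hexp, zpow_neg, zpow_natCast]
  obtain ⟨hp0, hn0⟩ := mul_ne_zero_iff.1 hH00
  obtain ⟨hp1, hn1⟩ := mul_ne_zero_iff.1 hH10
  obtain ⟨hpK, hnK⟩ := mul_ne_zero_iff.1 hK0
  have hmainQ : ((plusPart s ⊔ I ⊔ F).index : ℚ) * (N.range.relIndex (F ⊓ V) : ℚ) =
      (q : ℚ) ^ Module.finrank ℤ ↥(F ⊓ V) * (Nat.card ↥(I ⊓ F ⊓ V) : ℚ) *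
        (I.relIndex (N.ker ⊓ V) : ℚ) := by exact_mod_cast hmain
  have hqQ : (q : ℚ) ≠ 0 := by exact_mod_cast hq0
  push_cast
  rw [← Nat.cast_ne_zero (R := ℚ)] at hp1 hn1 hpK hnK
  field_simp
  linear_combination -hmainQ
end
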